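/- arXiv:2511.21571 — 2 statements merged into one kernel-verified Lean document; each statement's English description precedes it below -/
import Mathlib

section
/- For every ordered graph F, ρ_<(F) = inf{α ∈ [0,1] : there exists d₀ such that for every d ≥ d₀, every graph G on {0,1}^d satisfying (1/d)·Σ_{ℓ=1}^{d} e_ℓ(G)/τ_{ℓ,d} ≥ α contains an ordered copy of F}. -/
/-!
Write `A` for the set of thresholds whose infimum is taken on the right-hand side. Both
inequalities compare an ordered host graph with graphs on the cube by averaging over a family of
strictly increasing maps between them.

*No host beats the cube* (`sInf_thresholds_le`). If `a` is larger than `ρ_<(F, G)` but not in `A`,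
there are `F`-free graphs `H` of average level density at least `a` on arbitrarily large cubes.
No level density exceeds `1`, so linearly many levels have density close to `a` or more. Split such
rich levels into consecutive windows of `N ^ 2` levels, one window for each vertex of `G`, and map
`V(G)` to the cube by a random caterpillar: a uniform spine `σ`, forced to have bit `1` at one
random level of each window, from which leaf `j` departs by bit `0` at its own level and then
continues with private random bits. Two leaves `i < j` form a pair of the level of `i` whose
distribution is that of a uniform level pair, up to the forced bits; by orthogonality of the signs
of distinct bits, forcing one bit at a random level of a window changes averages of
`[0,1]`-valued functions by at most `1 / N` (`expect_force_random`). Hence each edge of `G` lands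
in `H` with probability at least `a` minus a small error (`expect_caterpillar`), and some outcome
pulls `H` back to a subgraph of `G` that has almost `a · e(G)` edges and is `F`-free because the
map is increasing.

*Some hosts are as good as the cube* (`exists_relTuranDensityIn_le`). The host is a subgraph of
the blow-up of the complete graph on the cube: a vertex of a block is a string of bits, and two
vertices of distinct blocks are adjacent when they agree in the coordinates shared by their blocks;
blocks `x` and `y` share `d - δ(x,y)` coordinates, and no coordinate is shared by more than one
pair of blocks. Assigning a bit to each pair of a coordinate and an owner chooses a clique with one
vertex in each block, an increasing copy of the cube; all edges of level `ℓ` lie in the same number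
of these cliques, and this number is proportional to `τ_{ℓ,d}`. So the average, over the cliques,
of the average level density of a subgraph `H` is exactly `e(H) / e(host)` (`sum_sections`), and a
subgraph of density above `a ∈ A` contains `F`. Since a subgraph of the host may lack vertices,
isolated vertices of `F` need some room. To provide it, the edges at the top `|F|` present vertices
of each block and at the lowest `|F|` present vertices overall are deleted first (`exists_trim`),
which costs a negligible proportion of the edges because blocks are huge.
-/

open scoped Classical

/-- `G` contains an ordered copy of `F`: a strictly order-preserving map
sending edges to edges. -/
def ContainsOrderedCopy {α β : Type*} [Preorder α] [Preorder β]
    (F : SimpleGraph α) (G : SimpleGraph β) : Prop :=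
  ∃ φ : α → β, StrictMono φ ∧ ∀ u v, F.Adj u v → G.Adj (φ u) (φ v)

/-- The number of edges of a simple graph. -/
noncomputable def edgeCount {α : Type*} (G : SimpleGraph α) : ℕ := G.edgeSet.ncard

/-- `ρ_<(F, G)`: the largest edge-density of an `F`-free (ordered) subgraph of `G`. -/
noncomputable def relTuranDensityIn {α β : Type*} [Preorder α] [Preorder β]
    (F : SimpleGraph α) (G : SimpleGraph β) : ℝ :=
  sSup {r : ℝ | ∃ G' : G.Subgraph, ¬ ContainsOrderedCopy F G'.coe ∧
    r = (edgeCount G'.coe : ℝ) / (edgeCount G : ℝ)}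

/-- `ρ_<(F)`: the relative Turán density of an ordered graph `F`, the infimum of
`ρ_<(F, G)` over all finite ordered graphs `G` with at least one edge. -/
noncomputable def relTuranDensity {α : Type*} [Preorder α] (F : SimpleGraph α) : ℝ :=
  sInf {r : ℝ | ∃ (n : ℕ) (G : SimpleGraph (Fin n)),
    1 ≤ edgeCount G ∧ r = relTuranDensityIn F G}

/-- The cube `{0,1}^d`, ordered lexicographically (index `0` most significant). -/
abbrev Cube (d : ℕ) := Lex (Fin d → Bool)

noncomputable instance (priority := 2000) (d : ℕ) : LinearOrder (Cube d) :=
  haveI : WellFoundedLT (Fin d) := inferInstance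
  inferInstance

instance instFintypeLexSelf {α : Type*} [Fintype α] : Fintype (Lex α) := ‹Fintype α›

/-- `δ(x, y) = ℓ`, with positions `1`-indexed: the least (1-indexed) coordinate at which
`x` and `y` differ is `ℓ`. -/
def atLevel {d : ℕ} (ℓ : ℕ) (x y : Cube d) : Prop :=
  ∃ i : Fin d, (i : ℕ) + 1 = ℓ ∧ ofLex x i ≠ ofLex y i ∧ ∀ j < i, ofLex x j = ofLex y j

/-- `e_ℓ(G)`: the number of level-`ℓ` edges of a graph `G` on `{0,1}^d`. -/
noncomputable def levelCount {d : ℕ} (G : SimpleGraph (Cube d)) (ℓ : ℕ) : ℕ :=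
  {p : Cube d × Cube d | p.1 < p.2 ∧ G.Adj p.1 p.2 ∧ atLevel ℓ p.1 p.2}.ncard

/-- `τ_{ℓ,d} = 2 ^ (2d - ℓ - 1)`. -/
def tau (d ℓ : ℕ) : ℕ := 2 ^ (2 * d - ℓ - 1)

/-- The level `ℓ` is `α`-rich with respect to `G`, i.e. `e_ℓ(G) ≥ α · τ_{ℓ,d}`. -/
def IsRichLevel {d : ℕ} (G : SimpleGraph (Cube d)) (α : ℝ) (ℓ : ℕ) : Prop :=
  α * (tau d ℓ : ℝ) ≤ (levelCount G ℓ : ℝ)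

/-- `G` is `(α, C)`-rich: at least `C` levels `ℓ ∈ [d]` are `α`-rich. -/
def IsRichGraph {d : ℕ} (G : SimpleGraph (Cube d)) (α C : ℝ) : Prop :=
  C ≤ ({ℓ : ℕ | ℓ ∈ Finset.Icc 1 d ∧ IsRichLevel G α ℓ}.ncard : ℝ)

/-- The vertex set `{0,1}^d × [m]`, ordered lexicographically. -/
abbrev BlockVert (d m : ℕ) := Lex (Cube d × Fin m)

/-- `e_ℓ(R)` for a graph `R` on `{0,1}^d × [m]`: the number of edges whose endpoints lie in
blocks `B_x`, `B_y` with `δ(x,y) = ℓ`. -/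
noncomputable def levelCountB {d m : ℕ} (R : SimpleGraph (BlockVert d m)) (ℓ : ℕ) : ℕ :=
  {p : BlockVert d m × BlockVert d m |
    p.1 < p.2 ∧ R.Adj p.1 p.2 ∧ atLevel ℓ (ofLex p.1).1 (ofLex p.2).1}.ncard

/-- Property (i) with accuracy `ε`: every level `ℓ ∈ [d]` has
`(1−ε)·2^(d−1)·m² ≤ e_ℓ(R) ≤ (1+ε)·2^(d−1)·m²`. -/
def PropI {d m : ℕ} (R : SimpleGraph (BlockVert d m)) (ε : ℝ) : Prop :=
  ∀ ℓ ∈ Finset.Icc 1 d,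
    (1 - ε) * 2 ^ (d - 1) * (m : ℝ) ^ 2 ≤ (levelCountB R ℓ : ℝ) ∧
    (levelCountB R ℓ : ℝ) ≤ (1 + ε) * 2 ^ (d - 1) * (m : ℝ) ^ 2

/-- Property (ii) with accuracy `ε`: for all distinct `x, y ∈ {0,1}^d` (say `δ(x,y) = ℓ`) and
all `P ⊆ B_x`, `Q ⊆ B_y` of size at least `m^(2/3)`, the number of edges of `R` between `P`
and `Q` is at most `(1+ε)·2^(−d+ℓ)·|P|·|Q|`. -/
def PropII {d m : ℕ} (R : SimpleGraph (BlockVert d m)) (ε : ℝ) : Prop :=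
  ∀ (x y : Cube d) (ℓ : ℕ), atLevel ℓ x y →
    ∀ P Q : Finset (Fin m),
      (m : ℝ) ^ ((2 : ℝ)/3) ≤ (P.card : ℝ) → (m : ℝ) ^ ((2 : ℝ)/3) ≤ (Q.card : ℝ) →
      ({pq : Fin m × Fin m | pq.1 ∈ P ∧ pq.2 ∈ Q ∧
          R.Adj (toLex (x, pq.1)) (toLex (y, pq.2))}.ncard : ℝ) ≤
        (1 + ε) * 2 ^ ((ℓ : ℤ) - (d : ℤ)) * (P.card : ℝ) * (Q.card : ℝ)

/-- `F` contains a monotone path of length two: vertices `u < v < w` with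
`uv, vw ∈ E(F)`. -/
def HasMonotonePathTwo {α : Type*} [Preorder α] (F : SimpleGraph α) : Prop :=
  ∃ u v w, u < v ∧ v < w ∧ F.Adj u v ∧ F.Adj v w

/-- The ordered graph `H_k` on `[k] × {0,1}` (ordered lexicographically), with edges
`(x,0)(y,1)` for `x ≤ y`. -/
def Hgraph (k : ℕ) : SimpleGraph (Lex (Fin k × Bool)) :=
  SimpleGraph.fromRel (fun a b =>
    (ofLex a).2 = false ∧ (ofLex b).2 = true ∧ (ofLex a).1 ≤ (ofLex b).1)

open scoped BigOperators
open Finset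

/-! ### Averages over function spaces -/

/-- Resampling one coordinate does not change the average over a function space. -/
lemma expect_resample {ι β : Type*} [Fintype ι] [DecidableEq ι] [Fintype β] [Nonempty β]
    (t : ι) (g : (ι → β) → ℝ) :
    𝔼 p : ι → β, 𝔼 r : β, g (Function.update p t r) = 𝔼 p : ι → β, g p := by
  have inv : Function.Involutive
      (fun q : (ι → β) × β => (Function.update q.1 t q.2, q.1 t)) := by
    rintro ⟨p, r⟩
    simp
  have h := Fintype.expect_equiv (inv.toPerm _)
    (fun q : (ι → β) × β => g (Function.update q.1 t q.2)) (fun q => g q.1) (fun q => rfl)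
  rw [← Finset.univ_product_univ, Finset.expect_product, Finset.expect_product] at h
  simpa [Fintype.expect_const] using h

/-- The average over a function space of a function of one value is the average over values. -/
lemma expect_eval {ι β : Type*} [Fintype ι] [DecidableEq ι] [Fintype β] [Nonempty β]
    (t : ι) (g : β → ℝ) :
    𝔼 p : ι → β, g (p t) = 𝔼 r : β, g r := by
  rw [← expect_resample t]
  simp

/-- The `±1`-valued indicator of the event that the bit `σ q` equals `b`. -/
def bitSign {d : ℕ} (b : Bool) (q : Fin d) (σ : Fin d → Bool) : ℝ :=
  if σ q = b then 1 else -1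

lemma expect_force {d : ℕ} (b : Bool) (q : Fin d) (f : (Fin d → Bool) → ℝ) :
    𝔼 σ, f (Function.update σ q b) = 𝔼 σ, f σ * (1 + bitSign b q σ) := by
  rw [← expect_resample q (fun σ => f σ * (1 + bitSign b q σ))]
  refine Finset.expect_congr rfl fun σ _ => ?_
  rw [Fintype.expect_eq_sum_div_card, Fintype.sum_bool]
  cases b <;> simp [bitSign] <;> ring

lemma expect_bitSign_mul {d : ℕ} (b : Bool) (q q' : Fin d) :
    𝔼 σ, bitSign b q σ * bitSign b q' σ = if q = q' then 1 else 0 := by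
  split_ifs with h
  · subst h
    have : ∀ σ, bitSign b q σ * bitSign b q σ = 1 := by
      intro σ; unfold bitSign; split_ifs <;> norm_num
    simp [this]
  · rw [← expect_resample q]
    refine Finset.expect_eq_zero fun σ _ => ?_
    rw [Fintype.expect_eq_sum_div_card, Fintype.sum_bool]
    cases b <;> simp [bitSign, Function.update_of_ne (Ne.symm h)] <;> split_ifs <;> norm_num

/-- Forcing one bit at a random one out of `N ^ 2` positions changes the average of a
`[0,1]`-valued function by at most `1 / N`: the density of the forced string with respect to the
uniform one is `1 +` an average of `N ^ 2` orthonormal signs. -/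
lemma expect_force_random {d N : ℕ} (hN : 0 < N) (b : Bool) (pos : Fin (N ^ 2) → Fin d)
    (hpos : Function.Injective pos) (f : (Fin d → Bool) → ℝ) (h0 : ∀ σ, 0 ≤ f σ)
    (h1 : ∀ σ, f σ ≤ 1) :
    (𝔼 σ, f σ) - 1 / (N : ℝ) ≤ 𝔼 r, 𝔼 σ, f (Function.update σ (pos r) b) := by
  have hN' : (0 : ℝ) < N := by exact_mod_cast hN
  have : Nonempty (Fin (N ^ 2)) := ⟨⟨0, by positivity⟩⟩
  set S : (Fin d → Bool) → ℝ := fun σ => 𝔼 r, bitSign b (pos r) σ with hS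
  have e1 : 𝔼 r, 𝔼 σ, f (Function.update σ (pos r) b) = (𝔼 σ, f σ) + 𝔼 σ, f σ * S σ := by
    simp_rw [expect_force]
    rw [Finset.expect_comm, ← Finset.expect_add_distrib]
    refine Finset.expect_congr rfl fun σ _ => ?_
    rw [← Finset.mul_expect, Finset.expect_add_distrib, Fintype.expect_const]
    ring
  have e2 : 𝔼 σ, S σ ^ 2 = 1 / (N : ℝ) ^ 2 := by
    have : ∀ σ, S σ ^ 2 = 𝔼 r, 𝔼 r', bitSign b (pos r) σ * bitSign b (pos r') σ := by
      intro σ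
      rw [sq, hS, Finset.expect_mul_expect]
    simp_rw [this]
    rw [Finset.expect_comm]
    have : ∀ r, 𝔼 σ, 𝔼 r', bitSign b (pos r) σ * bitSign b (pos r') σ = 1 / (N : ℝ) ^ 2 := by
      intro r
      rw [Finset.expect_comm]
      simp_rw [expect_bitSign_mul, hpos.eq_iff]
      rw [Fintype.expect_eq_sum_div_card]
      simp
    simp_rw [this]
    exact Fintype.expect_const _
  -- the inequality `|S| ≤ (N S² + 1 / N) / 2` replaces the Cauchy–Schwarz inequality
  have e3 : ∀ σ, -((N * S σ ^ 2 + 1 / N) / 2) ≤ f σ * S σ := by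
    intro σ
    have h2 : |S σ| ≤ (N * S σ ^ 2 + 1 / N) / 2 := by
      have : (N * S σ ^ 2 + 1 / N) / 2 - |S σ| = (N * |S σ| - 1) ^ 2 / (2 * N) := by
        rw [← sq_abs (S σ)]
        field_simp
        ring
      have h3 : 0 ≤ (N * |S σ| - 1) ^ 2 / (2 * N) := by positivity
      linarith
    have h4 : |f σ * S σ| ≤ |S σ| := by
      rw [abs_mul, abs_of_nonneg (h0 σ)]
      exact mul_le_of_le_one_left (abs_nonneg _) (h1 σ)
    linarith [neg_abs_le (f σ * S σ)]
  have e4 := Finset.expect_le_expect (s := Finset.univ) fun σ _ => e3 σ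
  have e5 : 𝔼 σ, -((N * S σ ^ 2 + 1 / N) / 2) = -(1 / (N : ℝ)) := by
    rw [Finset.expect_neg_distrib, ← Finset.expect_div, Finset.expect_add_distrib,
      ← Finset.mul_expect, e2, Fintype.expect_const]
    field_simp
    ring
  rw [e1]
  linarith

/-! ### Levels of the cube -/

lemma cube_lt_iff {d : ℕ} (x y : Cube d) :
    x < y ↔ ∃ i, (∀ j < i, ofLex x j = ofLex y j) ∧ ofLex x i < ofLex y i := Iff.rfl

lemma lt_and_atLevel_iff {d : ℕ} (q : Fin d) (x y : Cube d) :
    (x < y ∧ atLevel ((q : ℕ) + 1) x y) ↔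
      (∀ j < q, ofLex x j = ofLex y j) ∧ ofLex x q = false ∧ ofLex y q = true := by
  rw [cube_lt_iff]
  constructor
  · rintro ⟨⟨i, hi, hlt⟩, i', hi', hne, heq⟩
    have e : i' = q := Fin.ext (by omega)
    subst e
    have : i = i' := by
      rcases lt_trichotomy i i' with h | h | h
      · exact absurd (heq i h) hlt.ne
      · exact h
      · exact absurd (hi i' h) hne
    subst this
    exact ⟨heq, (Bool.lt_iff.mp hlt).1, (Bool.lt_iff.mp hlt).2⟩
  · rintro ⟨h, h0, h1⟩
    exact ⟨⟨q, h, by rw [h0, h1]; decide⟩, q, rfl, by rw [h0, h1]; decide, h⟩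

/-- The `0`-side endpoint of the level pair branching at coordinate `q`, with common prefix taken
from `σ` and tail taken from `z`. -/
def leftLeaf {d : ℕ} (q : Fin d) (σ z : Fin d → Bool) : Cube d :=
  toLex fun j => if j < q then σ j else if j = q then false else z j

/-- The `1`-side endpoint of the level pair branching at coordinate `q`, with prefix and tail
taken from `σ`. -/
def rightLeaf {d : ℕ} (q : Fin d) (σ : Fin d → Bool) : Cube d :=
  toLex fun j => if j = q then true else σ j

/-- The adjacency indicator of a graph. -/
noncomputable def adjInd {V : Type*} (H : SimpleGraph V) (x y : V) : ℝ :=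
  if H.Adj x y then 1 else 0

lemma adjInd_nonneg {V : Type*} (H : SimpleGraph V) (x y : V) : 0 ≤ adjInd H x y := by
  unfold adjInd; split_ifs <;> norm_num

lemma adjInd_le_one {V : Type*} (H : SimpleGraph V) (x y : V) : adjInd H x y ≤ 1 := by
  unfold adjInd; split_ifs <;> norm_num

/-- The level-`ℓ` edges of `H`, as increasing pairs. -/
noncomputable def levelFinset {d : ℕ} (H : SimpleGraph (Cube d)) (ℓ : ℕ) :
    Finset (Cube d × Cube d) :=
  Finset.univ.filter fun p => p.1 < p.2 ∧ H.Adj p.1 p.2 ∧ atLevel ℓ p.1 p.2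

lemma levelCount_eq_card {d : ℕ} (H : SimpleGraph (Cube d)) (ℓ : ℕ) :
    levelCount H ℓ = #(levelFinset H ℓ) := by
  unfold levelCount levelFinset
  rw [← Set.ncard_coe_finset]
  simp

lemma leaf_fiber {d : ℕ} (q : Fin d) (x y : Cube d)
    (h : (∀ j < q, ofLex x j = ofLex y j) ∧ ofLex x q = false ∧ ofLex y q = true) :
    (Finset.univ.filter fun p : (Fin d → Bool) × (Fin d → Bool) =>
      (leftLeaf q p.1 p.2, rightLeaf q p.1) = (x, y)) =
    (Fintype.piFinset fun j => if j = q then Finset.univ else {ofLex y j}) ×ˢ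
    (Fintype.piFinset fun j => if j ≤ q then Finset.univ else {ofLex x j}) := by
  obtain ⟨h, h0, h1⟩ := h
  ext ⟨σ, z⟩
  simp only [mem_filter, mem_univ, true_and, mem_product, Fintype.mem_piFinset, Prod.mk.injEq]
  constructor
  · rintro ⟨hx, hy⟩
    refine ⟨fun j => ?_, fun j => ?_⟩
    · have := congrFun (congrArg ofLex hy) j
      simp only [rightLeaf, ofLex_toLex] at this
      split_ifs with hj
      · simp
      · rw [if_neg hj] at this; simp [this]
    · have := congrFun (congrArg ofLex hx) j
      simp only [leftLeaf, ofLex_toLex] at this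
      split_ifs with hj
      · simp
      · rw [if_neg (fun h => hj h.le), if_neg (fun h => hj h.le)] at this; simp [this]
  · rintro ⟨hs, hz⟩
    constructor
    · apply ofLex.injective
      funext j
      simp only [leftLeaf, ofLex_toLex]
      split_ifs with hj hj'
      · have := hs j
        rw [if_neg hj.ne] at this
        rw [h j hj]; simpa using this
      · rw [hj', h0]
      · have := hz j
        rw [if_neg (fun h => (lt_or_eq_of_le h).elim hj hj')] at this
        simpa using this
    · apply ofLex.injective
      funext j
      simp only [rightLeaf, ofLex_toLex]
      split_ifs with hj
      · rw [hj, h1]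
      · have := hs j
        rw [if_neg hj] at this
        simpa using this

lemma leaf_fiber_card {d : ℕ} (q : Fin d) (x y : Cube d)
    (h : (∀ j < q, ofLex x j = ofLex y j) ∧ ofLex x q = false ∧ ofLex y q = true) :
    #(Finset.univ.filter fun p : (Fin d → Bool) × (Fin d → Bool) =>
      (leftLeaf q p.1 p.2, rightLeaf q p.1) = (x, y)) = 2 ^ ((q : ℕ) + 2) := by
  rw [leaf_fiber q x y h, card_product, Fintype.card_piFinset, Fintype.card_piFinset]
  have e1 : ∏ j : Fin d, #(if j = q then (Finset.univ : Finset Bool) else {ofLex y j}) = 2 := by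
    rw [Finset.prod_eq_single q]
    · simp
    · intro j _ hj; simp [hj]
    · simp
  have e2 : ∏ j : Fin d, #(if j ≤ q then (Finset.univ : Finset Bool) else {ofLex x j}) =
      2 ^ ((q : ℕ) + 1) := by
    have : ∀ j, #(if j ≤ q then (Finset.univ : Finset Bool) else {ofLex x j}) =
        if j ≤ q then 2 else 1 := by
      intro j; split_ifs <;> simp
    simp_rw [this]
    rw [Finset.prod_ite]
    simp only [prod_const, one_pow, mul_one]
    congr 1
    rw [show (Finset.univ.filter fun j => j ≤ q) = Finset.Iic q by ext; simp]
    simp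
  rw [e1, e2]
  ring

/-- The density of `H` on a level is the probability that a uniformly random pair on that level,
built from two independent uniform strings, is an edge. -/
lemma expect_leaf {d : ℕ} (H : SimpleGraph (Cube d)) (q : Fin d) :
    𝔼 σ, 𝔼 z, adjInd H (leftLeaf q σ z) (rightLeaf q σ) =
      (levelCount H ((q : ℕ) + 1) : ℝ) / tau d ((q : ℕ) + 1) := by
  have key : #(Finset.univ.filter fun p : (Fin d → Bool) × (Fin d → Bool) =>
      H.Adj (leftLeaf q p.1 p.2) (rightLeaf q p.1)) =
      levelCount H ((q : ℕ) + 1) * 2 ^ ((q : ℕ) + 2) := by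
    rw [levelCount_eq_card]
    rw [Finset.card_eq_sum_card_fiberwise
      (f := fun p : (Fin d → Bool) × (Fin d → Bool) => (leftLeaf q p.1 p.2, rightLeaf q p.1))
      (t := levelFinset H ((q : ℕ) + 1))]
    · apply Finset.sum_const_nat
      rintro ⟨x, y⟩ hxy
      simp only [levelFinset, mem_filter, mem_univ, true_and] at hxy
      rw [← leaf_fiber_card q x y ((lt_and_atLevel_iff q x y).1 ⟨hxy.1, hxy.2.2⟩)]
      congr 1
      ext ⟨σ, z⟩
      simp only [mem_filter, mem_univ, true_and, Prod.mk.injEq, and_iff_right_iff_imp]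
      rintro ⟨rfl, rfl⟩
      exact hxy.2.1
    · rintro ⟨σ, z⟩ h
      simp only [coe_filter, mem_univ, true_and, Set.mem_ofPred_eq] at h
      simp only [levelFinset, coe_filter, mem_univ, true_and, Set.mem_ofPred_eq]
      have := (lt_and_atLevel_iff q (leftLeaf q σ z) (rightLeaf q σ)).2
        ⟨fun j hj => by simp [leftLeaf, rightLeaf, hj, hj.ne],
          by simp [leftLeaf], by simp [rightLeaf]⟩
      exact ⟨this.1, h, this.2⟩
  rw [← Finset.expect_product', Finset.univ_product_univ, Fintype.expect_eq_sum_div_card]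
  have e : ∑ p : (Fin d → Bool) × (Fin d → Bool), adjInd H (leftLeaf q p.1 p.2) (rightLeaf q p.1)
      = (levelCount H ((q : ℕ) + 1) : ℝ) * 2 ^ ((q : ℕ) + 2) := by
    unfold adjInd
    rw [Finset.sum_boole, key]
    push_cast
    ring
  rw [e, div_eq_div_iff (by simp) (by simp [tau])]
  simp only [tau, Fintype.card_prod, Fintype.card_pi, Fintype.card_bool, prod_const, card_univ,
    Fintype.card_fin]
  push_cast
  rw [mul_assoc, ← pow_add, ← pow_add]
  congr 2
  have := q.2
  omega

lemma levelCount_div_tau_le_one {d : ℕ} (H : SimpleGraph (Cube d)) (q : Fin d) :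
    (levelCount H ((q : ℕ) + 1) : ℝ) / tau d ((q : ℕ) + 1) ≤ 1 := by
  rw [← expect_leaf]
  exact Finset.expect_le Finset.univ_nonempty fun σ _ =>
    Finset.expect_le Finset.univ_nonempty fun z _ => adjInd_le_one _ _ _

lemma sum_Icc_eq_sum_fin (d : ℕ) (f : ℕ → ℝ) :
    ∑ ℓ ∈ Finset.Icc 1 d, f ℓ = ∑ q : Fin d, f ((q : ℕ) + 1) := by
  rw [Fin.sum_univ_eq_sum_range (fun i => f (i + 1)), Finset.range_eq_Ico,
    Finset.sum_Ico_add' f 0 d 1]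
  rfl

/-! ### A random monotone caterpillar in the cube -/

/-- The string `σ` with the bit at position `pos t (p t)` overwritten by `b t`, for every
`t ∈ T`. -/
noncomputable def force {n D d : ℕ} (pos : Fin n → Fin D → Fin d) (b : Fin n → Bool)
    (T : Finset (Fin n)) (p : Fin n → Fin D) (σ : Fin d → Bool) : Fin d → Bool :=
  fun q => if ∃ t ∈ T, pos t (p t) = q then decide (∃ t ∈ T, b t = true ∧ pos t (p t) = q)
    else σ q

section Caterpillar

variable {n D d N : ℕ}

lemma force_insert (pos : Fin n → Fin D → Fin d)
    (hlt : ∀ t t', t < t' → ∀ r r', pos t r < pos t' r') (b : Fin n → Bool)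
    (T : Finset (Fin n)) (t : Fin n) (ht : t ∉ T) (p : Fin n → Fin D) (σ : Fin d → Bool) :
    force pos b (insert t T) p σ = force pos b T p (Function.update σ (pos t (p t)) (b t)) := by
  funext q
  have hne : ∀ t' ∈ T, pos t' (p t') ≠ pos t (p t) := by
    intro t' ht' h
    rcases lt_trichotomy t t' with h' | h' | h'
    · exact (hlt _ _ h' (p t) (p t')).ne h.symm
    · exact ht (h' ▸ ht')
    · exact (hlt _ _ h' (p t') (p t)).ne h
  unfold force
  by_cases hq : pos t (p t) = q
  · subst hq
    have h1 : ¬ ∃ t' ∈ T, pos t' (p t') = pos t (p t) := by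
      rintro ⟨t', h, h'⟩; exact hne t' h h'
    have h2 : ¬ ∃ t' ∈ T, b t' = true ∧ pos t' (p t') = pos t (p t) := by
      rintro ⟨t', h, _, h'⟩; exact hne t' h h'
    simp only [Finset.exists_mem_insert, h1, h2, or_false, if_true, if_false, and_true,
      Function.update_self, Bool.decide_eq_true]
  · simp only [Finset.exists_mem_insert, hq, false_or, and_false, Function.update_of_ne (Ne.symm hq)]

lemma force_congr (pos : Fin n → Fin D → Fin d) (b : Fin n → Bool)
    (T : Finset (Fin n)) (p p' : Fin n → Fin D) (h : ∀ t ∈ T, p t = p' t) (σ : Fin d → Bool) :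
    force pos b T p σ = force pos b T p' σ := by
  funext q
  have h1 : (∃ t ∈ T, pos t (p t) = q) ↔ ∃ t ∈ T, pos t (p' t) = q :=
    exists_congr fun t => and_congr_right fun ht => by rw [h t ht]
  have h2 : (∃ t ∈ T, b t = true ∧ pos t (p t) = q) ↔ ∃ t ∈ T, b t = true ∧ pos t (p' t) = q :=
    exists_congr fun t => and_congr_right fun ht => by rw [h t ht]
  unfold force
  simp only [h1, h2]

/-- Forcing one random bit in each of several windows costs at most `1 / N` per window. -/
lemma expect_force_finset (hN : 0 < N) (pos : Fin n → Fin (N ^ 2) → Fin d)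
    (hlt : ∀ t t', t < t' → ∀ r r', pos t r < pos t' r')
    (hinj : ∀ t, Function.Injective (pos t)) (b : Fin n → Bool) (i : Fin n)
    (f : Fin (N ^ 2) → (Fin d → Bool) → ℝ) (h0 : ∀ r σ, 0 ≤ f r σ) (h1 : ∀ r σ, f r σ ≤ 1)
    (T : Finset (Fin n)) (hi : i ∉ T) :
    (𝔼 p : Fin n → Fin (N ^ 2), 𝔼 σ, f (p i) σ) - #T / (N : ℝ) ≤
      𝔼 p : Fin n → Fin (N ^ 2), 𝔼 σ, f (p i) (force pos b T p σ) := by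
  have : Nonempty (Fin (N ^ 2)) := ⟨⟨0, by positivity⟩⟩
  induction T using Finset.induction_on with
  | empty =>
    have : ∀ p σ, force pos b ∅ p σ = σ := fun p σ => by
      funext q
      simp [force]
    simp [this]
  | insert t T ht ih =>
    have hiT : i ∉ T := fun h => hi (Finset.mem_insert_of_mem h)
    have hit : i ≠ t := fun h => hi (h ▸ Finset.mem_insert_self _ _)
    have ih := ih hiT
    have step : (𝔼 p : Fin n → Fin (N ^ 2), 𝔼 σ, f (p i) (force pos b T p σ)) - 1 / (N : ℝ) ≤
        𝔼 p : Fin n → Fin (N ^ 2), 𝔼 σ, f (p i) (force pos b (insert t T) p σ) := by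
      simp_rw [force_insert pos hlt b T t ht]
      rw [← expect_resample t (fun p : Fin n → Fin (N ^ 2) =>
        𝔼 σ, f (p i) (force pos b T p (Function.update σ (pos t (p t)) (b t))))]
      rw [← Fintype.expect_const (ι := Fin n → Fin (N ^ 2)) (1 / (N : ℝ)),
        ← Finset.expect_sub_distrib]
      refine Finset.expect_le_expect fun p _ => ?_
      have := expect_force_random hN (b t) (pos t) (hinj t)
        (fun σ => f (p i) (force pos b T p σ)) (fun σ => h0 _ _) (fun σ => h1 _ _)
      refine this.trans (le_of_eq ?_)
      refine Finset.expect_congr rfl fun r _ => Finset.expect_congr rfl fun σ _ => ?_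
      rw [Function.update_of_ne hit, Function.update_self]
      congr 1
      apply force_congr
      intro t' ht'
      rw [Function.update_of_ne]
      rintro rfl
      exact ht ht'
    rw [Finset.card_insert_of_notMem ht]
    push_cast
    rw [add_div]
    linarith

/-- Exchanging the tails, beyond position `c`, of the spine and of row `j` of a family of
independent uniform strings preserves averages. -/
lemma expect_splice (c : Fin d) (j : Fin n) (g : (Fin d → Bool) → (Fin n → Fin d → Bool) → ℝ) :
    𝔼 σ, 𝔼 z, g σ z = 𝔼 σ : Fin d → Bool, 𝔼 z : Fin n → Fin d → Bool,
      g (fun q => if c < q then z j q else σ q)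
        (Function.update z j fun q => if c < q then σ q else z j q) := by
  have inv : Function.Involutive (fun s : (Fin d → Bool) × (Fin n → Fin d → Bool) =>
      ((fun q => if c < q then s.2 j q else s.1 q,
        Function.update s.2 j fun q => if c < q then s.1 q else s.2 j q) :
        (Fin d → Bool) × (Fin n → Fin d → Bool))) := by
    rintro ⟨σ, z⟩
    ext q
    · simp only [Function.update_self]
      split_ifs <;> rfl
    · rename_i q'
      by_cases h : q = j
      · subst h
        simp only [Function.update_self]
        split_ifs <;> rfl
      · simp only [Function.update_of_ne h]
  have h := Fintype.expect_equiv (inv.toPerm _)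
    (fun s : (Fin d → Bool) × (Fin n → Fin d → Bool) =>
      g (fun q => if c < q then s.2 j q else s.1 q)
        (Function.update s.2 j fun q => if c < q then s.1 q else s.2 j q))
    (fun s => g s.1 s.2) (fun s => rfl)
  rw [← Finset.univ_product_univ, Finset.expect_product, Finset.expect_product] at h
  exact h.symm

/-- Leaf number `j` of the random caterpillar: it follows the spine `σ`, taking the `1`-branch at
the branching positions of the earlier leaves, leaves the spine by the `0`-branch at its own
position `pos j (p j)`, and continues with its private random string `z j`. -/
noncomputable def caterpillar (pos : Fin n → Fin D → Fin d) (p : Fin n → Fin D)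
    (σ : Fin d → Bool) (z : Fin n → Fin d → Bool) (j : Fin n) : Cube d :=
  toLex fun q => if q < pos j (p j) then (if ∃ t < j, pos t (p t) = q then true else σ q)
    else if q = pos j (p j) then false else z j q

lemma caterpillar_strictMono (pos : Fin n → Fin D → Fin d)
    (hlt : ∀ t t', t < t' → ∀ r r', pos t r < pos t' r') (p : Fin n → Fin D)
    (σ : Fin d → Bool) (z : Fin n → Fin d → Bool) : StrictMono (caterpillar pos p σ z) := by
  intro i j hij
  refine (cube_lt_iff _ _).2 ?_
  have hP := hlt i j hij (p i) (p j)
  refine ⟨pos i (p i), fun q hq => ?_, ?_⟩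
  · simp only [caterpillar, ofLex_toLex, if_pos hq, if_pos (hq.trans hP)]
    have : (∃ t < i, pos t (p t) = q) ↔ ∃ t < j, pos t (p t) = q := by
      constructor
      · rintro ⟨t, h, h'⟩; exact ⟨t, h.trans hij, h'⟩
      · rintro ⟨t, h, h'⟩
        refine ⟨t, ?_, h'⟩
        by_contra hti
        rcases (not_lt.1 hti).lt_or_eq with h2 | h2
        · have := hlt i t h2 (p i) (p t)
          rw [h'] at this
          exact absurd hq this.not_gt
        · subst h2; exact hq.ne h'.symm
    simp only [this]
  · simp only [caterpillar, ofLex_toLex, lt_irrefl, if_false, if_true, if_pos hP]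
    rw [if_pos ⟨i, hij, rfl⟩]
    decide

/-- After its tail is exchanged with that of the spine, a pair of caterpillar leaves is a level
pair built from a spine with forced bits. -/
lemma caterpillar_splice (pos : Fin n → Fin D → Fin d)
    (hlt : ∀ t t', t < t' → ∀ r r', pos t r < pos t' r') (p : Fin n → Fin D)
    (σ : Fin d → Bool) (z : Fin n → Fin d → Bool) (i j : Fin n) (hij : i < j) :
    caterpillar pos p (fun q => if pos j (p j) < q then z j q else σ q)
        (Function.update z j fun q => if pos j (p j) < q then σ q else z j q) i =
      leftLeaf (pos i (p i))
        (force pos (fun t => decide (t < j)) ((Finset.Iic j).erase i) p σ) (z i) ∧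
    caterpillar pos p (fun q => if pos j (p j) < q then z j q else σ q)
        (Function.update z j fun q => if pos j (p j) < q then σ q else z j q) j =
      rightLeaf (pos i (p i))
        (force pos (fun t => decide (t < j)) ((Finset.Iic j).erase i) p σ) := by
  have hP := hlt i j hij (p i) (p j)
  have hinj : ∀ t t', pos t (p t) = pos t' (p t') → t = t' := by
    intro t t' h
    rcases lt_trichotomy t t' with h' | h' | h'
    · exact absurd h (hlt _ _ h' _ _).ne
    · exact h'
    · exact absurd h (hlt _ _ h' _ _).ne'
  have hmono : ∀ t t', pos t (p t) < pos t' (p t') → t < t' := by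
    intro t t' h
    rcases lt_trichotomy t t' with h' | h' | h'
    · exact h'
    · subst h'; exact absurd h (lt_irrefl _)
    · exact absurd h (hlt _ _ h' _ _).not_gt
  constructor
  · apply ofLex.injective
    funext q
    simp only [caterpillar, leftLeaf, ofLex_toLex, Function.update_of_ne hij.ne]
    split_ifs with h1 h2 h3
    · obtain ⟨t, ht, rfl⟩ := h2
      have m : t ∈ (Finset.Iic j).erase i := by simp [ht.ne, (ht.trans hij).le]
      unfold force
      rw [if_pos ⟨t, m, rfl⟩]
      simp only [true_eq_decide_iff]
      exact ⟨t, m, by simpa using ht.trans hij, rfl⟩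
    · exact absurd (h1.trans hP) h3.not_gt
    · unfold force
      rw [if_neg]
      rintro ⟨t, ht, rfl⟩
      exact h2 ⟨t, hmono _ _ h1, rfl⟩
    · rfl
    · rfl
  · apply ofLex.injective
    funext q
    simp only [caterpillar, rightLeaf, ofLex_toLex, Function.update_self]
    rcases lt_trichotomy q (pos j (p j)) with h1 | h1 | h1
    · simp only [if_pos h1, if_neg h1.not_gt]
      by_cases hq : q = pos i (p i)
      · rw [if_pos hq, if_pos ⟨i, hij, hq.symm⟩]
      · rw [if_neg hq]
        unfold force
        by_cases h2 : ∃ t < j, pos t (p t) = q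
        · obtain ⟨t, ht, rfl⟩ := h2
          have m : t ∈ (Finset.Iic j).erase i := by
            simp only [mem_erase, mem_Iic]
            exact ⟨fun h => hq (by rw [h]), ht.le⟩
          rw [if_pos ⟨t, ht, rfl⟩, if_pos ⟨t, m, rfl⟩]
          simp only [true_eq_decide_iff]
          exact ⟨t, m, by simpa using ht, rfl⟩
        · rw [if_neg h2, if_neg]
          rintro ⟨t, ht, rfl⟩
          exact h2 ⟨t, hmono _ _ h1, rfl⟩
    · subst h1
      have m : j ∈ (Finset.Iic j).erase i := by simp [hij.ne']
      simp only [lt_irrefl, if_false, if_true, if_neg hP.ne']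
      unfold force
      rw [if_pos ⟨j, m, rfl⟩]
      simp only [false_eq_decide_iff]
      rintro ⟨t, _, ht, ht'⟩
      have := hinj _ _ ht'
      subst this
      simp at ht
    · simp only [if_neg h1.not_gt, if_neg h1.ne', if_pos h1, if_neg (hP.trans h1).ne']
      unfold force
      rw [if_neg]
      rintro ⟨t, ht, rfl⟩
      have := hmono _ _ h1
      simp only [mem_erase, mem_Iic] at ht
      exact absurd ht.2 this.not_ge

/-- If every window consists of levels on which `H` has density at least `c`, then each pair of
caterpillar leaves is an edge of `H` with probability at least `c - n / N`. -/
lemma expect_caterpillar (hN : 0 < N) (pos : Fin n → Fin (N ^ 2) → Fin d)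
    (hlt : ∀ t t', t < t' → ∀ r r', pos t r < pos t' r')
    (hinj : ∀ t, Function.Injective (pos t)) (H : SimpleGraph (Cube d)) (c : ℝ)
    (hc : ∀ t r, c ≤ (levelCount H ((pos t r : ℕ) + 1) : ℝ) / tau d ((pos t r : ℕ) + 1))
    (i j : Fin n) (hij : i < j) :
    c - n / N ≤ 𝔼 p : Fin n → Fin (N ^ 2), 𝔼 σ, 𝔼 z,
      adjInd H (caterpillar pos p σ z i) (caterpillar pos p σ z j) := by
  have : Nonempty (Fin (N ^ 2)) := ⟨⟨0, by positivity⟩⟩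
  set f : Fin (N ^ 2) → (Fin d → Bool) → ℝ := fun r τ =>
    𝔼 w, adjInd H (leftLeaf (pos i r) τ w) (rightLeaf (pos i r) τ) with hf
  have e1 : ∀ p : Fin n → Fin (N ^ 2), 𝔼 σ, 𝔼 z,
      adjInd H (caterpillar pos p σ z i) (caterpillar pos p σ z j) =
      𝔼 σ, f (p i) (force pos (fun t => decide (t < j)) ((Finset.Iic j).erase i) p σ) := by
    intro p
    rw [expect_splice (pos j (p j)) j (fun σ z =>
      adjInd H (caterpillar pos p σ z i) (caterpillar pos p σ z j))]
    refine Finset.expect_congr rfl fun σ _ => ?_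
    have := fun z => caterpillar_splice pos hlt p σ z i j hij
    simp only [(this _).1, (this _).2, hf]
    exact expect_eval i (fun w => adjInd H (leftLeaf (pos i (p i))
      (force pos (fun t => decide (t < j)) ((Finset.Iic j).erase i) p σ) w) _)
  simp_rw [e1]
  have e2 := expect_force_finset hN pos hlt hinj (fun t => decide (t < j)) i f
    (fun r σ => Finset.expect_nonneg fun _ _ => adjInd_nonneg _ _ _)
    (fun r σ => Finset.expect_le Finset.univ_nonempty fun _ _ => adjInd_le_one _ _ _)
    ((Finset.Iic j).erase i) (by simp)
  refine le_trans ?_ e2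
  have e3 : c ≤ 𝔼 p : Fin n → Fin (N ^ 2), 𝔼 σ, f (p i) σ :=
    Finset.le_expect Finset.univ_nonempty fun p _ => (hc i (p i)).trans (expect_leaf H _).ge
  have e4 : (#((Finset.Iic j).erase i) : ℝ) ≤ n := by
    have := Finset.card_le_univ ((Finset.Iic j).erase i)
    rw [Fintype.card_fin] at this
    exact_mod_cast this
  have e5 : (#((Finset.Iic j).erase i) : ℝ) / N ≤ n / N := by gcongr
  linarith

end Caterpillar

/-! ### Pulling back dense graphs on the cube -/

/-- The edges of a graph on a linearly ordered vertex set, as increasing pairs. -/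
noncomputable def incPairs {V : Type*} [Fintype V] [LinearOrder V] (G : SimpleGraph V) :
    Finset (V × V) :=
  Finset.univ.filter fun p => p.1 < p.2 ∧ G.Adj p.1 p.2

lemma mem_incPairs {V : Type*} [Fintype V] [LinearOrder V] {G : SimpleGraph V} {p : V × V} :
    p ∈ incPairs G ↔ p.1 < p.2 ∧ G.Adj p.1 p.2 := by
  simp [incPairs]

/-- A graph of average level density at least `a` on a large cube pulls back, along a suitable
monotone map, to a `(a - ε)`-proportion of the edges of any given ordered graph. -/
lemma exists_pullback {n : ℕ} (G : SimpleGraph (Fin n)) {a ε : ℝ} (hε : 0 < ε) (ha : ε ≤ a) :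
    ∃ d₀ : ℕ, ∀ d ≥ d₀, ∀ H : SimpleGraph (Cube d),
      a ≤ (1 / (d : ℝ)) * ∑ ℓ ∈ Finset.Icc 1 d, (levelCount H ℓ : ℝ) / (tau d ℓ : ℝ) →
      ∃ ψ : Fin n → Cube d, StrictMono ψ ∧
        (a - ε) * #(incPairs G) ≤ #(incPairs (G ⊓ H.comap ψ)) := by
  obtain ⟨N, hN⟩ := exists_nat_gt (2 * n / ε)
  have hN0 : (0 : ℝ) < N := lt_of_le_of_lt (by positivity) hN
  have hN0' : 0 < N := by exact_mod_cast hN0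
  have hnN : (n : ℝ) / N ≤ ε / 2 := by
    rw [div_lt_iff₀ hε] at hN
    rw [div_le_iff₀ hN0]
    linarith
  obtain ⟨d₁, hd₁⟩ := exists_nat_ge ((n * N ^ 2 : ℕ) / (ε / 2))
  refine ⟨d₁ + 1, fun d hd H hH => ?_⟩
  have hd0 : (0 : ℝ) < d := by exact_mod_cast (by omega : 0 < d)
  set dens : Fin d → ℝ := fun q =>
    (levelCount H ((q : ℕ) + 1) : ℝ) / tau d ((q : ℕ) + 1) with hdens
  set Λ : Finset (Fin d) := Finset.univ.filter fun q => a - ε / 2 ≤ dens q with hΛ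
  -- many levels are rich, since no level has density above `1`
  have hcard : ε / 2 * d ≤ #Λ := by
    rw [sum_Icc_eq_sum_fin d (fun ℓ => (levelCount H ℓ : ℝ) / (tau d ℓ : ℝ)), one_div,
      ← div_eq_inv_mul, le_div_iff₀ hd0] at hH
    have h1 : ∑ q, dens q ≤ ∑ q : Fin d, ((a - ε / 2) + if q ∈ Λ then (1 : ℝ) else 0) := by
      refine Finset.sum_le_sum fun q _ => ?_
      split_ifs with hq
      · have := levelCount_div_tau_le_one H q
        simp only [hdens]
        linarith
      · simp only [hΛ, mem_filter, mem_univ, true_and, not_le] at hq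
        linarith
    rw [Finset.sum_add_distrib] at h1
    simp only [sum_const, card_univ, Fintype.card_fin, nsmul_eq_mul, sum_boole,
      Finset.filter_univ_mem] at h1
    have : a * d ≤ ∑ q, dens q := hH
    linarith
  have hcard' : n * N ^ 2 ≤ #Λ := by
    have h1 : ((n * N ^ 2 : ℕ) : ℝ) ≤ ε / 2 * d := by
      have h2 : (d₁ : ℝ) ≤ d := by exact_mod_cast (by omega : d₁ ≤ d)
      have h3 := hd₁.trans h2
      rw [div_le_iff₀ (by positivity)] at h3
      linarith
    exact_mod_cast h1.trans hcard
  set e := Λ.orderEmbOfCardLe hcard' with he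
  set pos : Fin n → Fin (N ^ 2) → Fin d := fun t r => e (finProdFinEquiv (t, r)) with hpos
  have hlt : ∀ t t', t < t' → ∀ r r', pos t r < pos t' r' := by
    intro t t' ht r r'
    refine e.strictMono ?_
    rw [Fin.lt_def]
    simp only [finProdFinEquiv_apply_val]
    have h1 : (t : ℕ) + 1 ≤ t' := ht
    have h2 := r.2
    calc (r : ℕ) + N ^ 2 * t < N ^ 2 + N ^ 2 * t := by omega
      _ = N ^ 2 * (t + 1) := by ring
      _ ≤ N ^ 2 * t' := Nat.mul_le_mul_left _ h1
      _ ≤ _ := Nat.le_add_left _ _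
  have hinj : ∀ t, Function.Injective (pos t) := by
    intro t r r' h
    have := finProdFinEquiv.injective (e.injective h)
    exact (Prod.mk.inj this).2
  have hc : ∀ t r, a - ε / 2 ≤
      (levelCount H ((pos t r : ℕ) + 1) : ℝ) / tau d ((pos t r : ℕ) + 1) := by
    intro t r
    have := Λ.orderEmbOfCardLe_mem hcard' (finProdFinEquiv (t, r))
    exact (mem_filter.1 this).2
  have hexp : (a - ε) * #(incPairs G) ≤ 𝔼 p : Fin n → Fin (N ^ 2), 𝔼 σ, 𝔼 z,
      ∑ ij ∈ incPairs G, adjInd H (caterpillar pos p σ z ij.1) (caterpillar pos p σ z ij.2) := by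
    simp_rw [Finset.expect_sum_comm]
    rw [mul_comm, ← nsmul_eq_mul]
    refine Finset.card_nsmul_le_sum _ _ _ fun ij hij => ?_
    have := expect_caterpillar hN0' pos hlt hinj H (a - ε / 2) hc ij.1 ij.2
      (mem_filter.1 hij).2.1
    linarith
  have : Nonempty (Fin (N ^ 2)) := ⟨⟨0, by positivity⟩⟩
  obtain ⟨p, -, hp⟩ := Finset.exists_le_of_le_expect Finset.univ_nonempty hexp
  obtain ⟨σ, -, hσ⟩ := Finset.exists_le_of_le_expect Finset.univ_nonempty hp
  obtain ⟨z, -, hz⟩ := Finset.exists_le_of_le_expect Finset.univ_nonempty hσ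
  refine ⟨caterpillar pos p σ z, caterpillar_strictMono pos hlt p σ z, hz.trans (le_of_eq ?_)⟩
  unfold adjInd
  rw [Finset.sum_boole]
  congr 2
  ext ij
  simp [incPairs, and_assoc]

lemma edgeCount_eq_card {V : Type*} [Fintype V] [LinearOrder V] (G : SimpleGraph V) :
    edgeCount G = #(incPairs G) := by
  unfold edgeCount
  rw [← Set.ncard_coe_finset]
  symm
  refine Set.ncard_congr (fun p _ => s(p.1, p.2)) ?_ ?_ ?_
  · rintro ⟨x, y⟩ h
    exact (mem_filter.1 h).2.2
  · rintro ⟨x, y⟩ ⟨x', y'⟩ h h' heq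
    have h1 := (mem_filter.1 h).2.1
    have h2 := (mem_filter.1 h').2.1
    rcases Sym2.eq_iff.1 heq with ⟨h3, h4⟩ | ⟨h3, h4⟩
    · exact Prod.ext h3 h4
    · simp only at h1 h2 h3 h4
      subst h3 h4
      exact absurd h1 h2.not_gt
  · intro e he
    induction e using Sym2.ind with
    | _ x y =>
      have hxy : G.Adj x y := he
      rcases lt_or_gt_of_ne hxy.ne with h | h
      · exact ⟨(x, y), by simp [incPairs, h, hxy], rfl⟩
      · exact ⟨(y, x), by simp [incPairs, h, hxy.symm], Sym2.eq_swap⟩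

lemma edgeCount_coe_eq_card {V : Type*} [Fintype V] [LinearOrder V] {G : SimpleGraph V}
    (G' : G.Subgraph) : edgeCount G'.coe = #(incPairs G'.spanningCoe) := by
  rw [edgeCount_eq_card]
  refine Finset.card_nbij (fun p => (p.1.1, p.2.1)) ?_ ?_ ?_
  · rintro ⟨x, y⟩ h
    have h := (mem_filter.1 h).2
    exact mem_filter.2 ⟨mem_univ _, h.1, h.2⟩
  · rintro ⟨x, y⟩ _ ⟨x', y'⟩ _ h
    simp only [Prod.mk.injEq] at h
    exact Prod.ext (Subtype.ext h.1) (Subtype.ext h.2)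
  · rintro ⟨x, y⟩ h
    have h := (mem_filter.1 (mem_coe.1 h)).2
    refine ⟨(⟨x, G'.edge_vert h.2⟩, ⟨y, G'.edge_vert (G'.adj_symm h.2)⟩), ?_, rfl⟩
    exact mem_coe.2 (mem_filter.2 ⟨mem_univ _, h.1, h.2⟩)

lemma incPairs_mono {V : Type*} [Fintype V] [LinearOrder V] {G H : SimpleGraph V} (h : G ≤ H) :
    incPairs G ⊆ incPairs H :=
  Finset.monotone_filter_right _ fun _ _ hp => ⟨hp.1, h hp.2⟩

/-- The set of thresholds `a` beyond which average level density forces a copy of `F`. -/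
def thresholds {α : Type*} [LinearOrder α] (F : SimpleGraph α) : Set ℝ :=
  {a : ℝ | a ∈ Set.Icc (0 : ℝ) 1 ∧ ∃ d₀ : ℕ, ∀ d ≥ d₀, ∀ G : SimpleGraph (Cube d),
        a ≤ (1 / (d : ℝ)) * ∑ ℓ ∈ Finset.Icc 1 d, (levelCount G ℓ : ℝ) / (tau d ℓ : ℝ) →
        ContainsOrderedCopy F G}

/-- Average level density `1` forces every ordered graph: the pullback of such a graph to a
complete graph loses less than one edge. -/
lemma one_mem_thresholds {α : Type*} [Fintype α] [LinearOrder α] (F : SimpleGraph α) :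
    (1 : ℝ) ∈ thresholds F := by
  refine ⟨by simp, ?_⟩
  set n := Fintype.card α
  let e : α ≃o Fin n := (Fintype.orderIsoFinOfCardEq α rfl).symm
  set K : SimpleGraph (Fin n) := ⊤
  have hε : (0 : ℝ) < 1 / (#(incPairs K) + 1) := by positivity
  obtain ⟨d₀, h⟩ := exists_pullback K (a := 1) hε (by
    rw [div_le_one (by positivity)]
    have : (0 : ℝ) ≤ #(incPairs K) := by positivity
    linarith)
  refine ⟨d₀, fun d hd H hH => ?_⟩
  obtain ⟨ψ, hψ, hle⟩ := h d hd H hH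
  have hall : incPairs (K ⊓ H.comap ψ) = incPairs K := by
    refine Finset.eq_of_subset_of_card_le (incPairs_mono inf_le_left) ?_
    have h1 : (1 / (#(incPairs K) + 1 : ℝ)) * #(incPairs K) < 1 := by
      rw [one_div, ← div_eq_inv_mul, div_lt_one (by positivity)]
      linarith
    have h2 : (#(incPairs K) : ℝ) < #(incPairs (K ⊓ H.comap ψ)) + 1 := by linarith
    exact Nat.lt_succ_iff.1 (by exact_mod_cast h2)
  have hadj : ∀ i j, i < j → H.Adj (ψ i) (ψ j) := by
    intro i j hij
    have : (i, j) ∈ incPairs K := by simp [incPairs, hij, K, hij.ne]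
    rw [← hall] at this
    exact (mem_incPairs.1 this).2.2
  refine ⟨ψ ∘ e, hψ.comp e.strictMono, fun u v huv => ?_⟩
  rcases lt_or_gt_of_ne huv.ne with h | h
  · exact hadj _ _ (e.strictMono h)
  · exact (hadj _ _ (e.strictMono h)).symm

lemma thresholds_bddBelow {α : Type*} [LinearOrder α] (F : SimpleGraph α) :
    BddBelow (thresholds F) := ⟨0, fun _ h => h.1.1⟩

lemma relTuranDensityIn_nonneg {α β : Type*} [Preorder α] [Preorder β] (F : SimpleGraph α)
    (G : SimpleGraph β) : 0 ≤ relTuranDensityIn F G := by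
  apply Real.sSup_nonneg
  rintro r ⟨G', -, rfl⟩
  positivity

/-- No host graph has a relative Turán density below the infimum of the thresholds. -/
lemma sInf_thresholds_le {α : Type*} [Fintype α] [LinearOrder α] (F : SimpleGraph α) {n : ℕ}
    (G : SimpleGraph (Fin n)) (hG : 1 ≤ edgeCount G) :
    sInf (thresholds F) ≤ relTuranDensityIn F G := by
  by_contra! hlt
  have hr0 := relTuranDensityIn_nonneg F G
  obtain ⟨a, ha, ha'⟩ := exists_between hlt
  have ha1 : a ≤ 1 := ha'.le.trans
    (csInf_le (thresholds_bddBelow F) (one_mem_thresholds F))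
  have hna : a ∉ thresholds F := fun h => absurd (csInf_le (thresholds_bddBelow F) h) ha'.not_ge
  set ε := (a - relTuranDensityIn F G) / 2 with hε
  obtain ⟨d₀, h⟩ := exists_pullback G (a := a) (ε := ε) (by linarith) (by linarith)
  apply hna
  refine ⟨⟨by linarith, ha1⟩, d₀, fun d hd H hH => ?_⟩
  by_contra hF
  obtain ⟨ψ, hψ, hle⟩ := h d hd H hH
  let G' : G.Subgraph := SimpleGraph.toSubgraph (G ⊓ H.comap ψ) inf_le_left
  have hfree : ¬ ContainsOrderedCopy F G'.coe := by
    rintro ⟨φ, hφ, hadj⟩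
    exact hF ⟨fun u => ψ (φ u), fun u v huv => hψ (hφ huv), fun u v huv => (hadj u v huv).2⟩
  have hG0 : (0 : ℝ) < edgeCount G := by exact_mod_cast hG
  have hspan : G'.spanningCoe = G ⊓ H.comap ψ := rfl
  have hmem : (edgeCount G'.coe : ℝ) / edgeCount G ≤ relTuranDensityIn F G := by
    refine le_csSup ⟨1, ?_⟩ ⟨G', hfree, rfl⟩
    rintro r ⟨G'', -, rfl⟩
    rw [div_le_one hG0, edgeCount_coe_eq_card, edgeCount_eq_card]
    exact_mod_cast Finset.card_le_card (incPairs_mono G''.spanningCoe_le)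
  have h1 : a - ε ≤ (edgeCount G'.coe : ℝ) / edgeCount G := by
    rw [le_div_iff₀ hG0, edgeCount_coe_eq_card, edgeCount_eq_card, hspan]
    exact hle
  linarith

/-! ### A host graph with uniformly distributed sections -/

lemma card_column {X : Type*} [Fintype X] [DecidableEq X] (a b : X) (u v : Bool)
    (h : a = b → u = v) :
    4 * #(Finset.univ.filter fun c : X → Bool => c a = u ∧ c b = v) =
      2 ^ Fintype.card X * if a = b then 2 else 1 := by
  have key : (Finset.univ.filter fun c : X → Bool => c a = u ∧ c b = v) =
      Fintype.piFinset fun j => if j = a then {u} else if j = b then {v} else Finset.univ := by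
    ext c
    simp only [mem_filter, mem_univ, true_and, Fintype.mem_piFinset]
    constructor
    · rintro ⟨h1, h2⟩ j
      split_ifs with h3 h4
      · simp [h3, h1]
      · simp [h4, h2]
      · simp
    · intro hc
      have h1 := hc a
      have h2 := hc b
      simp only [if_true, mem_singleton] at h1 h2
      refine ⟨h1, ?_⟩
      split_ifs at h2 with h3
      · rw [h h3.symm] at h2
        simpa using h2
      · simpa using h2
  have hcount : ∀ j, #(if j = a then ({u} : Finset Bool) else if j = b then {v} else Finset.univ) *
      ((if j = a then 2 else 1) * (if j = b then (if a = b then 1 else 2) else 1)) = 2 := by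
    intro j
    by_cases h1 : j = a <;> by_cases h2 : j = b <;> simp_all
    grind
  have hprod := Finset.prod_congr (rfl : (Finset.univ : Finset X) = Finset.univ)
    fun j _ => hcount j
  rw [Finset.prod_mul_distrib, Finset.prod_mul_distrib, Finset.prod_ite_eq', Finset.prod_ite_eq',
    Finset.prod_const, Finset.card_univ, ← Fintype.card_piFinset, ← key] at hprod
  simp only [mem_univ, if_true] at hprod
  rw [← hprod]
  split_ifs <;> ring

/-- The index set of the coordinates of a vertex inside its block. -/
abbrev Coord (d : ℕ) := Cube d × Cube d × Fin d

/-- The owner of coordinate `i` at block `x`. Each coordinate `(u, v, p)` is shared by at most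
one pair of blocks: it is shared by `u < v` when these already differ somewhere before `p`, so
that a pair differing first in position `q` (counted from `0`) shares `d - 1 - q` coordinates. -/
noncomputable def own {d : ℕ} (x : Cube d) (i : Coord d) : Cube d :=
  if i.2.1 = x ∧ i.1 < x ∧ ∃ q < i.2.2, ofLex i.1 q ≠ ofLex x q then i.1 else x

lemma own_eq_own_iff {d : ℕ} {x y : Cube d} (hxy : x < y) (i : Coord d) :
    own x i = own y i ↔ i.1 = x ∧ i.2.1 = y ∧ ∃ q < i.2.2, ofLex x q ≠ ofLex y q := by
  obtain ⟨u, v, p⟩ := i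
  have hne := hxy.ne
  unfold own
  constructor
  · intro h
    dsimp only at h ⊢
    split_ifs at h with h1 h2 h2
    · exact absurd (h1.1.symm.trans h2.1) hne
    · exact absurd (h ▸ h1.2.1) hxy.not_gt
    · obtain ⟨h3, h4, h5⟩ := h2
      subst h
      exact ⟨rfl, h3, h5⟩
    · exact absurd h hne
  · rintro ⟨rfl, rfl, h⟩
    dsimp only at h ⊢
    rw [if_neg (by simp), if_pos ⟨rfl, hxy, h⟩]

lemma card_own_eq_own {d : ℕ} (q : Fin d) {x y : Cube d} (hxy : x < y)
    (hl : atLevel ((q : ℕ) + 1) x y) :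
    #(Finset.univ.filter fun i => own x i = own y i) = d - 1 - q := by
  have h := (lt_and_atLevel_iff q x y).1 ⟨hxy, hl⟩
  have : (Finset.univ.filter fun i => own x i = own y i) =
      ({x} : Finset (Cube d)) ×ˢ (({y} : Finset (Cube d)) ×ˢ Finset.Ioi q) := by
    ext ⟨u, v, p⟩
    simp only [mem_filter, mem_univ, true_and, own_eq_own_iff hxy, mem_product, mem_singleton,
      mem_Ioi]
    refine and_congr_right fun _ => and_congr_right fun _ => ⟨?_, fun hp => ⟨q, hp, ?_⟩⟩
    · rintro ⟨q', hq', hne⟩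
      by_contra hp
      exact hne (h.1 q' (hq'.trans_le (not_lt.1 hp)))
    · rw [h.2.1, h.2.2]
      simp
  rw [this]
  simp

/-- The size of a block. -/
abbrev blockSize (d : ℕ) : ℕ := Fintype.card (Coord d → Bool)

/-- The bits of a vertex of a block. -/
noncomputable def bits {d : ℕ} : Fin (blockSize d) ≃ (Coord d → Bool) :=
  (Fintype.equivFin _).symm

/-- The host graph: vertices of distinct blocks are adjacent when their bits agree in all
coordinates shared by the two blocks. -/
def host (d : ℕ) : SimpleGraph (BlockVert d (blockSize d)) where
  Adj v w := (ofLex v).1 ≠ (ofLex w).1 ∧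
    ∀ i, own (ofLex v).1 i = own (ofLex w).1 i → bits (ofLex v).2 i = bits (ofLex w).2 i
  symm := ⟨fun _ _ h => ⟨h.1.symm, fun i hi => (h.2 i hi.symm).symm⟩⟩
  loopless := ⟨fun _ h => h.1 rfl⟩

/-- A bit is assigned to each pair of a coordinate and an owner; reading off the bits of the
owners chooses a vertex in every block. -/
noncomputable def hostSection {d : ℕ} (ω : Coord d → Cube d → Bool) (x : Cube d) :
    BlockVert d (blockSize d) :=
  toLex (x, bits.symm fun i => ω i (own x i))

lemma host_adj_hostSection {d : ℕ} (ω : Coord d → Cube d → Bool) {x y : Cube d} (h : x ≠ y) :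
    (host d).Adj (hostSection ω x) (hostSection ω y) := by
  refine ⟨h, fun i hi => ?_⟩
  have hi' : own x i = own y i := hi
  simp [hostSection, hi']

lemma hostSection_eq_iff {d : ℕ} (ω : Coord d → Cube d → Bool) (v : BlockVert d (blockSize d)) :
    hostSection ω (ofLex v).1 = v ↔ ∀ i, ω i (own (ofLex v).1 i) = bits (ofLex v).2 i := by
  rw [← funext_iff (f := fun i => ω i (own (ofLex v).1 i)), ← Equiv.symm_apply_eq]
  constructor
  · intro h
    exact congrArg (fun w : BlockVert d (blockSize d) => (ofLex w).2) h
  · intro h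
    exact congrArg toLex (Prod.ext rfl h)

/-- The normalising constant: each edge of the host lies in `sectionWeight d * τ` sections, where
`τ` is the number of pairs of cube vertices of the same level. -/
noncomputable def sectionWeight (d : ℕ) : ℝ :=
  Fintype.card (Coord d → Cube d → Bool) / (4 ^ Fintype.card (Coord d) * 2 ^ (d - 1))

lemma card_sections_through {d : ℕ} (q : Fin d) {v w : BlockVert d (blockSize d)}
    (hvw : (host d).Adj v w) (hlt : (ofLex v).1 < (ofLex w).1)
    (hl : atLevel ((q : ℕ) + 1) (ofLex v).1 (ofLex w).1) :
    (#(Finset.univ.filter fun ω : Coord d → Cube d → Bool =>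
      hostSection ω (ofLex v).1 = v ∧ hostSection ω (ofLex w).1 = w) : ℝ) =
      sectionWeight d * tau d ((q : ℕ) + 1) := by
  have key : (Finset.univ.filter fun ω : Coord d → Cube d → Bool =>
      hostSection ω (ofLex v).1 = v ∧ hostSection ω (ofLex w).1 = w) =
      Fintype.piFinset fun i => Finset.univ.filter fun c : Cube d → Bool =>
        c (own (ofLex v).1 i) = bits (ofLex v).2 i ∧
        c (own (ofLex w).1 i) = bits (ofLex w).2 i := by
    ext ω
    simp only [mem_filter, mem_univ, true_and, Fintype.mem_piFinset, hostSection_eq_iff,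
      forall_and]
  have hcount : 4 ^ Fintype.card (Coord d) *
      #(Finset.univ.filter fun ω : Coord d → Cube d → Bool =>
        hostSection ω (ofLex v).1 = v ∧ hostSection ω (ofLex w).1 = w) =
      Fintype.card (Coord d → Cube d → Bool) * 2 ^ (d - 1 - (q : ℕ)) := by
    have h4 : 4 ^ Fintype.card (Coord d) = ∏ _i : Coord d, 4 := by simp
    rw [key, Fintype.card_piFinset, h4, ← Finset.prod_mul_distrib,
      Finset.prod_congr rfl fun i _ => card_column _ _ _ _ (hvw.2 i), Finset.prod_mul_distrib,
      Finset.prod_ite, Finset.prod_const, Finset.prod_const, Finset.prod_const,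
      card_own_eq_own q hlt hl]
    simp
  have hτ : tau d ((q : ℕ) + 1) = 2 ^ (d - 1) * 2 ^ (d - 1 - (q : ℕ)) := by
    have := q.2
    rw [tau, ← pow_add]
    congr 1
    omega
  have hcount' : (4 : ℝ) ^ Fintype.card (Coord d) *
      #(Finset.univ.filter fun ω : Coord d → Cube d → Bool =>
        hostSection ω (ofLex v).1 = v ∧ hostSection ω (ofLex w).1 = w) =
      Fintype.card (Coord d → Cube d → Bool) * 2 ^ (d - 1 - (q : ℕ)) := by
    exact_mod_cast hcount
  rw [hτ, sectionWeight, div_mul_eq_mul_div, eq_div_iff (by positivity)]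
  push_cast at hcount' ⊢
  linear_combination (2 : ℝ) ^ (d - 1) * hcount'

lemma blockVert_lt_iff {d m : ℕ} {v w : BlockVert d m} (h : (ofLex v).1 ≠ (ofLex w).1) :
    v < w ↔ (ofLex v).1 < (ofLex w).1 := by
  rw [Prod.Lex.lt_iff]
  simp [h]

/-- Summed over all sections, the pulled back level densities of a subgraph of the host count
its edges exactly. -/
lemma sum_sections {d : ℕ} (H : SimpleGraph (BlockVert d (blockSize d))) (hH : H ≤ host d) :
    ∑ ω : Coord d → Cube d → Bool, ∑ q : Fin d,
      (levelCount (H.comap (hostSection ω)) ((q : ℕ) + 1) : ℝ) / tau d ((q : ℕ) + 1) =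
      sectionWeight d * #(incPairs H) := by
  set lvl : Fin d → BlockVert d (blockSize d) × BlockVert d (blockSize d) → Prop := fun q p =>
    (ofLex p.1).1 < (ofLex p.2).1 ∧ atLevel ((q : ℕ) + 1) (ofLex p.1).1 (ofLex p.2).1 with hlvl
  have hblock : ∀ p ∈ incPairs H, (ofLex p.1).1 < (ofLex p.2).1 := fun p hp => by
    obtain ⟨h1, h2⟩ := mem_incPairs.1 hp
    exact (blockVert_lt_iff (hH h2).1).1 h1
  have hsec : ∀ (q : Fin d) (ω : Coord d → Cube d → Bool),
      levelCount (H.comap (hostSection ω)) ((q : ℕ) + 1) =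
      #(((incPairs H).filter (lvl q)).filter fun p =>
        hostSection ω (ofLex p.1).1 = p.1 ∧ hostSection ω (ofLex p.2).1 = p.2) := by
    intro q ω
    rw [levelCount_eq_card]
    refine Finset.card_nbij (fun p => (hostSection ω p.1, hostSection ω p.2)) ?_ ?_ ?_
    · rintro ⟨x, y⟩ h
      obtain ⟨h1, h2, h3⟩ := (mem_filter.1 h).2
      refine mem_filter.2 ⟨mem_filter.2 ⟨mem_incPairs.2 ⟨?_, h2⟩, h1, h3⟩, rfl, rfl⟩
      exact (blockVert_lt_iff (v := hostSection ω x) (w := hostSection ω y) (hH h2).1).2 h1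
    · rintro ⟨x, y⟩ _ ⟨x', y'⟩ _ h
      have h1 := congrArg (fun p : BlockVert d (blockSize d) × BlockVert d (blockSize d) =>
        ((ofLex p.1).1, (ofLex p.2).1)) h
      exact h1
    · rintro ⟨v, w⟩ h
      obtain ⟨h1, h2, h3⟩ := mem_filter.1 (mem_coe.1 h)
      obtain ⟨h4, h5, h6⟩ := mem_filter.1 h1
      refine ⟨((ofLex v).1, (ofLex w).1), ?_, Prod.ext h2 h3⟩
      refine mem_coe.2 (mem_filter.2 ⟨mem_univ _, h5, ?_, h6⟩)
      have h7 := (mem_incPairs.1 h4).2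
      dsimp only at h2 h3 h7
      rw [SimpleGraph.comap_adj, h2, h3]
      exact h7
  have hlevel : ∀ q : Fin d, ∑ ω : Coord d → Cube d → Bool,
      (levelCount (H.comap (hostSection ω)) ((q : ℕ) + 1) : ℝ) / tau d ((q : ℕ) + 1) =
      sectionWeight d * #((incPairs H).filter (lvl q)) := by
    intro q
    have hτ : (0 : ℝ) < tau d ((q : ℕ) + 1) := by simp [tau]
    rw [← Finset.sum_div, div_eq_iff hτ.ne', ← Nat.cast_sum,
      Finset.sum_congr rfl fun ω _ => hsec q ω]
    have := Finset.sum_card_bipartiteAbove_eq_sum_card_bipartiteBelow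
      (s := (Finset.univ : Finset (Coord d → Cube d → Bool)))
      (t := (incPairs H).filter (lvl q)) (fun ω p =>
        hostSection ω (ofLex p.1).1 = p.1 ∧ hostSection ω (ofLex p.2).1 = p.2)
    unfold Finset.bipartiteAbove Finset.bipartiteBelow at this
    rw [this, Nat.cast_sum, Finset.sum_congr rfl fun p hp =>
      card_sections_through q (hH (mem_incPairs.1 (mem_filter.1 hp).1).2) (mem_filter.1 hp).2.1
        (mem_filter.1 hp).2.2, Finset.sum_const, nsmul_eq_mul]
    ring
  rw [Finset.sum_comm, Finset.sum_congr rfl fun q _ => hlevel q, ← Finset.mul_sum,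
    ← Nat.cast_sum]
  congr 2
  have := Finset.sum_card_bipartiteAbove_eq_sum_card_bipartiteBelow
    (s := (Finset.univ : Finset (Fin d))) (t := incPairs H) lvl
  unfold Finset.bipartiteAbove Finset.bipartiteBelow at this
  -- every edge has exactly one level
  rw [this, Finset.card_eq_sum_ones]
  refine Finset.sum_congr rfl fun p hp => ?_
  rw [Finset.card_eq_one]
  obtain ⟨q, hq, hq'⟩ := (cube_lt_iff _ _).1 (hblock p hp)
  refine ⟨q, ?_⟩
  ext q'
  rw [mem_filter, mem_singleton, hlvl]
  dsimp only
  rw [lt_and_atLevel_iff]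
  constructor
  · rintro ⟨-, h1, h2, h3⟩
    rcases lt_trichotomy q' q with h | h | h
    · have := hq q' h
      rw [h2, h3] at this
      cases this
    · exact h
    · exact absurd (h1 q h) hq'.ne
  · rintro rfl
    have := Bool.lt_iff.1 hq'
    exact ⟨mem_univ _, hq, this.1, this.2⟩

lemma levelCount_top_div_tau {d : ℕ} (q : Fin d) :
    (levelCount (⊤ : SimpleGraph (Cube d)) ((q : ℕ) + 1) : ℝ) / tau d ((q : ℕ) + 1) = 1 := by
  rw [← expect_leaf]
  have : ∀ σ z : Fin d → Bool, adjInd ⊤ (leftLeaf q σ z) (rightLeaf q σ) = 1 := by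
    intro σ z
    unfold adjInd
    rw [if_pos]
    intro h
    have := congrFun (congrArg ofLex h) q
    simp [leftLeaf, rightLeaf] at this
  simp [this]

lemma sectionWeight_mul_host (d : ℕ) :
    sectionWeight d * #(incPairs (host d)) = Fintype.card (Coord d → Cube d → Bool) * d := by
  rw [← sum_sections (host d) le_rfl]
  have : ∀ ω : Coord d → Cube d → Bool, (host d).comap (hostSection ω) = ⊤ := by
    intro ω
    ext x y
    rw [SimpleGraph.comap_adj, SimpleGraph.top_adj]
    exact ⟨fun h => h.1, host_adj_hostSection ω⟩
  simp_rw [this, levelCount_top_div_tau]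
  simp

lemma sectionWeight_pos (d : ℕ) : 0 < sectionWeight d := by
  unfold sectionWeight
  have : 0 < Fintype.card (Coord d → Cube d → Bool) := Fintype.card_pos
  positivity

lemma blockSize_sq_le {d : ℕ} (hd : 1 ≤ d) :
    ((blockSize d : ℝ)) ^ 2 ≤ #(incPairs (host d)) := by
  have h := sectionWeight_mul_host d
  have hc : (0 : ℝ) < Fintype.card (Coord d → Cube d → Bool) := by
    exact_mod_cast Fintype.card_pos
  rw [sectionWeight, div_mul_eq_mul_div, div_eq_iff (by positivity), mul_assoc] at h
  have h' := mul_left_cancel₀ hc.ne' h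
  rw [h']
  have h1 : (1 : ℝ) ≤ d := by exact_mod_cast hd
  have h2 : (1 : ℝ) ≤ 2 ^ (d - 1) := one_le_pow₀ (by norm_num)
  have h3 : ((blockSize d : ℝ)) ^ 2 = 4 ^ Fintype.card (Coord d) := by
    have : blockSize d = 2 ^ Fintype.card (Coord d) := by simp [blockSize]
    rw [this]
    push_cast
    rw [← pow_mul, mul_comm, pow_mul]
    norm_num
  rw [h3]
  have h4 : (0 : ℝ) ≤ 4 ^ Fintype.card (Coord d) := by positivity
  calc (4 : ℝ) ^ Fintype.card (Coord d) = 1 * (4 ^ Fintype.card (Coord d) * 1) := by ring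
    _ ≤ _ := by gcongr

/-- Some section sees at least the density of a subgraph of the host. -/
lemma exists_dense_section {d : ℕ} (hd : 1 ≤ d) {H : SimpleGraph (BlockVert d (blockSize d))}
    (hH : H ≤ host d) {a : ℝ} (ha : a * #(incPairs (host d)) ≤ #(incPairs H)) :
    ∃ ω : Coord d → Cube d → Bool, a ≤ (1 / (d : ℝ)) * ∑ ℓ ∈ Finset.Icc 1 d,
      (levelCount (H.comap (hostSection ω)) ℓ : ℝ) / (tau d ℓ : ℝ) := by
  have hd0 : (0 : ℝ) < d := by exact_mod_cast hd
  have h : ∑ _ω : Coord d → Cube d → Bool, a * d ≤ ∑ ω : Coord d → Cube d → Bool, ∑ q : Fin d,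
      (levelCount (H.comap (hostSection ω)) ((q : ℕ) + 1) : ℝ) / tau d ((q : ℕ) + 1) := by
    rw [sum_sections H hH, Finset.sum_const, card_univ, nsmul_eq_mul]
    have h1 := mul_le_mul_of_nonneg_left ha (sectionWeight_pos d).le
    linear_combination h1 - a * sectionWeight_mul_host d
  obtain ⟨ω, -, hω⟩ := Finset.exists_le_of_sum_le Finset.univ_nonempty h
  refine ⟨ω, ?_⟩
  rw [sum_Icc_eq_sum_fin d (fun ℓ =>
    (levelCount (H.comap (hostSection ω)) ℓ : ℝ) / (tau d ℓ : ℝ)), one_div,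
    ← div_eq_inv_mul, le_div_iff₀ hd0]
  exact hω

/-! ### Making room for isolated vertices -/

/-- A strictly increasing placement of some elements of `α` into `s` slots, with gaps of size at
least `|α|` before, between and after them, extends to a strictly increasing placement of `α`. -/
lemma exists_extension {α : Type*} [Fintype α] [LinearOrder α] {s : ℕ} (W : Finset α)
    (r : α → ℕ) (hs : Fintype.card α ≤ s) (h1 : ∀ p ∈ W, Fintype.card α ≤ r p)
    (h2 : ∀ p ∈ W, r p + Fintype.card α ≤ s)
    (h3 : ∀ p ∈ W, ∀ q ∈ W, p < q → r p + Fintype.card α ≤ r q) :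
    ∃ θ : α → Fin s, StrictMono θ ∧ ∀ p ∈ W, (θ p : ℕ) = r p := by
  set idx : α → ℕ := fun u => ((Fintype.orderIsoFinOfCardEq α rfl).symm u : ℕ) with hidx
  have hmono : StrictMono idx := fun u v h =>
    (Fintype.orderIsoFinOfCardEq α rfl).symm.strictMono h
  have hlt : ∀ u, idx u < Fintype.card α := fun u =>
    ((Fintype.orderIsoFinOfCardEq α rfl).symm u).2
  -- each element follows, without further gaps, the last prescribed element before it
  set shift : α → ℕ := fun u => (W.filter (· ≤ u)).sup fun p => r p - idx p with hshift
  have hshift_mono : Monotone shift := fun u v h =>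
    Finset.sup_mono fun p hp => by
      rw [mem_filter] at hp ⊢
      exact ⟨hp.1, hp.2.trans h⟩
  have hbound : ∀ u, idx u + shift u < s := by
    intro u
    have : shift u ≤ s - 1 - idx u := by
      refine Finset.sup_le fun p hp => ?_
      obtain ⟨hp, hpu⟩ := mem_filter.1 hp
      have := h2 p hp
      have := hlt u
      omega
    have := hlt u
    omega
  refine ⟨fun u => ⟨idx u + shift u, hbound u⟩, fun u v h => ?_, fun p hp => ?_⟩
  · have := hmono h
    have := hshift_mono h.le
    rw [Fin.mk_lt_mk]
    omega
  · have : shift p = r p - idx p := by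
      refine le_antisymm (Finset.sup_le fun q hq => ?_) ?_
      · obtain ⟨hq, hqp⟩ := mem_filter.1 hq
        rcases hqp.eq_or_lt with rfl | hqp
        · exact le_rfl
        · have := h3 q hq p hp hqp
          have := hlt p
          omega
      · exact Finset.le_sup (f := fun p => r p - idx p) (mem_filter.2 ⟨hp, le_rfl⟩)
    have h4 := h1 p hp
    have h5 := hlt p
    change idx p + shift p = r p
    omega

/-- Discarding a bounded number of vertices of `S` from each block leaves a set `T` such that
any increasing choice of vertices of `T` in distinct blocks, indexed by a subset of `α`, extends
to an increasing choice of vertices of `S` indexed by `α`. -/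
lemma exists_trim (α : Type*) [Fintype α] [LinearOrder α] {V X : Type*} [Fintype V]
    [LinearOrder V] [Fintype X] [LinearOrder X] (blk : V → X) (hblk : Monotone blk)
    (S : Finset V) :
    ∃ T ⊆ S, #(S \ T) ≤ Fintype.card α * (Fintype.card X + 1) ∧
      (T.Nonempty → ∀ (W : Finset α) (g : α → V), (∀ p ∈ W, g p ∈ T) →
        (∀ p ∈ W, ∀ q ∈ W, p < q → blk (g p) < blk (g q)) →
        ∃ θ : α → V, StrictMono θ ∧ (∀ u, θ u ∈ S) ∧ ∀ p ∈ W, θ p = g p) := by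
  set k := Fintype.card α with hk
  set o := S.orderEmbOfFin rfl with ho
  -- vertices of `S` with `k` vertices of `S` below, and one of the same block `k` places above
  set good : Finset (Fin #S) := Finset.univ.filter fun i =>
    k ≤ (i : ℕ) ∧ ∃ j : Fin #S, blk (o j) = blk (o i) ∧ (i : ℕ) + k ≤ j with hgood
  have hmem_good : ∀ i, i ∈ good ↔ k ≤ (i : ℕ) ∧ ∃ j : Fin #S, blk (o j) = blk (o i) ∧
      (i : ℕ) + k ≤ j := by simp [hgood]
  set last : X → Finset (Fin #S) := fun x => Finset.univ.filter fun i =>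
    blk (o i) = x ∧ ∀ j : Fin #S, blk (o j) = x → (j : ℕ) < i + k with hlast
  have hcard_last : ∀ x, #(last x) ≤ k := by
    intro x
    rcases (last x).eq_empty_or_nonempty with h | h
    · simp [h]
    · have hmin := (mem_filter.1 ((last x).min'_mem h)).2
      calc #(last x) ≤ #(Finset.Ico ((last x).min' h : ℕ) ((last x).min' h + k)) := by
            refine Finset.card_le_card_of_injOn (fun i => (i : ℕ)) (fun i hi => ?_)
              (fun i _ j _ hij => Fin.ext hij)
            have h1 : (last x).min' h ≤ i := Finset.min'_le _ _ hi
            exact mem_coe.2 (mem_Ico.2 ⟨h1, hmin.2 i (mem_filter.1 hi).2.1⟩)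
        _ = k := by simp
  have hcard_bad : #goodᶜ ≤ k * (Fintype.card X + 1) := by
    have hsub : goodᶜ ⊆ (Finset.univ.filter fun i : Fin #S => (i : ℕ) < k) ∪
        Finset.univ.biUnion last := by
      intro i hi
      rw [mem_compl, hmem_good] at hi
      rw [mem_union, mem_filter, mem_biUnion]
      by_cases hik : (i : ℕ) < k
      · exact Or.inl ⟨mem_univ _, hik⟩
      · refine Or.inr ⟨blk (o i), mem_univ _, mem_filter.2 ⟨mem_univ _, rfl, fun j hj => ?_⟩⟩
        by_contra hji
        exact hi ⟨not_lt.1 hik, j, hj, not_lt.1 hji⟩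
    have h1 : #(Finset.univ.filter fun i : Fin #S => (i : ℕ) < k) ≤ k := by
      refine (Finset.card_le_card_of_injOn (t := Finset.range k) (fun i : Fin #S => (i : ℕ))
        (fun i hi => mem_coe.2 (mem_range.2 (mem_filter.1 hi).2))
        Fin.val_injective.injOn).trans ?_
      simp
    have h2 : #(Finset.univ.biUnion last) ≤ Fintype.card X * k :=
      Finset.card_biUnion_le_card_mul _ _ _ fun x _ => hcard_last x
    calc _ ≤ _ := Finset.card_le_card hsub
      _ ≤ _ := Finset.card_union_le _ _
      _ ≤ k + Fintype.card X * k := add_le_add h1 h2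
      _ = _ := by ring
  have hoS : ∀ i, o i ∈ S := fun i => S.orderEmbOfFin_mem rfl i
  have hsurj : ∀ v ∈ S, ∃ i, o i = v := by
    intro v hv
    have : v ∈ Set.range o := by rw [ho, Finset.range_orderEmbOfFin]; exact hv
    exact this
  refine ⟨good.image o, ?_, ?_, ?_⟩
  · intro v hv
    obtain ⟨i, -, rfl⟩ := mem_image.1 hv
    exact hoS i
  · refine le_trans ?_ hcard_bad
    refine (Finset.card_le_card (t := goodᶜ.image o) fun v hv => ?_).trans card_image_le
    obtain ⟨hv, hv'⟩ := mem_sdiff.1 hv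
    obtain ⟨i, rfl⟩ := hsurj v hv
    refine mem_image_of_mem _ (mem_compl.2 fun hi => hv' (mem_image_of_mem _ hi))
  · rintro ⟨v, hv⟩ W g hg hlt
    obtain ⟨i₀, hi₀, -⟩ := mem_image.1 hv
    have hkS : k ≤ #S := ((hmem_good i₀).1 hi₀).1.trans i₀.2.le
    have hr : ∀ p, ∃ i : ℕ, p ∈ W → ∃ h : i < #S, ⟨i, h⟩ ∈ good ∧ o ⟨i, h⟩ = g p := by
      intro p
      by_cases hp : p ∈ W
      · obtain ⟨i, hi, hi'⟩ := mem_image.1 (hg p hp)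
        exact ⟨i, fun _ => ⟨i.2, hi, hi'⟩⟩
      · exact ⟨0, fun h => absurd h hp⟩
    choose r hr using hr
    obtain ⟨θ, hθ, hθr⟩ := exists_extension (s := #S) W r hkS
      (fun p hp => by
        obtain ⟨h, hg, -⟩ := hr p hp
        exact ((hmem_good _).1 hg).1)
      (fun p hp => by
        obtain ⟨h, hg, -⟩ := hr p hp
        obtain ⟨-, j, -, hj⟩ := (hmem_good _).1 hg
        exact hj.trans j.2.le)
      (fun p hp q hq hpq => by
        obtain ⟨h, hg, hgp⟩ := hr p hp
        obtain ⟨h', hg', hgq⟩ := hr q hq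
        obtain ⟨-, j, hj', hj⟩ := (hmem_good _).1 hg
        refine hj.trans ?_
        by_contra hlt'
        have h1 : blk (o ⟨r q, h'⟩) ≤ blk (o j) :=
          hblk (o.monotone (Fin.le_def.2 (not_le.1 hlt').le))
        rw [hj', hgp, hgq] at h1
        exact absurd (hlt p hp q hq hpq) h1.not_gt)
    refine ⟨fun u => o (θ u), o.strictMono.comp hθ, fun u => hoS _, fun p hp => ?_⟩
    obtain ⟨h, -, hgp⟩ := hr p hp
    rw [← hgp]
    exact congrArg o (Fin.ext (hθr p hp))

/-! ### Dense subgraphs of the host -/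

/-- In high dimension a block has many more than `4 ^ d` vertices, so that bounded losses in each
of the `2 ^ d` blocks are negligible. -/
lemma exists_le_blockSize (k : ℕ) {ε : ℝ} (hε : 0 < ε) (d₀ : ℕ) :
    ∃ d ≥ d₀, 1 ≤ d ∧ (4 : ℝ) * k * 4 ^ d ≤ ε * blockSize d := by
  obtain ⟨d₁, hd₁⟩ := exists_nat_ge (4 * k / ε)
  set d := max d₀ (d₁ + 2) with hd
  have hd2 : 2 ≤ d := by omega
  refine ⟨d, le_max_left _ _, by omega, ?_⟩
  have hcard : blockSize d = 2 ^ (4 ^ d * d) := by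
    have h4 : 4 ^ d = 2 ^ d * 2 ^ d := by rw [← mul_pow]; norm_num
    have : Fintype.card (Coord d) = 4 ^ d * d := by
      rw [h4, Fintype.card_prod, Fintype.card_prod]
      simp [mul_assoc]
    simp only [blockSize, Fintype.card_fun, Fintype.card_bool, this]
  have h1 : d * 4 ^ d ≤ blockSize d := by
    have h2 : d < 4 ^ d := Nat.lt_pow_self (by norm_num)
    have h3 : 4 ^ d < 2 ^ 4 ^ d := Nat.lt_pow_self (by norm_num)
    calc d * 4 ^ d ≤ 2 ^ 4 ^ d * 2 ^ 4 ^ d := Nat.mul_le_mul (h2.trans h3).le h3.le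
      _ = 2 ^ (4 ^ d * 2) := by rw [pow_mul, sq]
      _ ≤ 2 ^ (4 ^ d * d) := Nat.pow_le_pow_right (by norm_num) (Nat.mul_le_mul_left _ hd2)
      _ = _ := hcard.symm
  have h2 : (4 : ℝ) * k ≤ ε * d := by
    have h3 : (d₁ : ℝ) ≤ d := by exact_mod_cast (by omega : d₁ ≤ d)
    have h4 := hd₁.trans h3
    rw [div_le_iff₀ hε] at h4
    linarith
  calc (4 : ℝ) * k * 4 ^ d ≤ ε * d * 4 ^ d := by gcongr
    _ = ε * ((d * 4 ^ d : ℕ) : ℝ) := by push_cast; ring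
    _ ≤ ε * blockSize d := by gcongr

/-- Restricting a graph with all edges inside `S` to the edges inside `T` destroys at most the
edges at vertices of `S \ T`. -/
lemma card_incPairs_le_trim {V : Type*} [Fintype V] [LinearOrder V] (H : SimpleGraph V)
    (S T : Finset V) (hS : ∀ v w, H.Adj v w → v ∈ S) (H' : SimpleGraph V)
    (hH' : ∀ v w, H'.Adj v w ↔ H.Adj v w ∧ v ∈ T ∧ w ∈ T) :
    #(incPairs H) ≤ #(incPairs H') + 2 * #(S \ T) * Fintype.card V := by
  have hsub : incPairs H ⊆ incPairs H' ∪
      ((S \ T) ×ˢ Finset.univ ∪ Finset.univ ×ˢ (S \ T)) := by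
    rintro ⟨v, w⟩ h
    obtain ⟨h1, h2⟩ := mem_incPairs.1 h
    simp only [mem_union, mem_product, mem_univ, true_and, and_true, mem_sdiff, mem_incPairs,
      hH']
    have hv := hS v w h2
    have hw := hS w v h2.symm
    tauto
  calc _ ≤ _ := Finset.card_le_card hsub
    _ ≤ _ := Finset.card_union_le _ _
    _ ≤ #(incPairs H') + (#(S \ T) * Fintype.card V + Fintype.card V * #(S \ T)) := by
        gcongr
        refine (Finset.card_union_le _ _).trans ?_
        simp
    _ = _ := by ring

/-- Beyond a threshold, a subgraph of a suitable host contains `F`, even with the isolated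
vertices of `F` placed in a prescribed set `S` covering the edges of the subgraph. -/
lemma exists_copy_in_host {α : Type*} [Fintype α] [LinearOrder α] (F : SimpleGraph α) {a : ℝ}
    (ha : a ∈ thresholds F) {ε : ℝ} (hε : 0 < ε) :
    ∃ d, 1 ≤ #(incPairs (host d)) ∧ ∀ (S : Finset (BlockVert d (blockSize d)))
      (H : SimpleGraph (BlockVert d (blockSize d))), H ≤ host d →
      (∀ v w, H.Adj v w → v ∈ S) → (a + ε) * #(incPairs (host d)) < #(incPairs H) →
      ∃ θ : α → BlockVert d (blockSize d), StrictMono θ ∧ (∀ u, θ u ∈ S) ∧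
        ∀ u v, F.Adj u v → H.Adj (θ u) (θ v) := by
  obtain ⟨⟨ha0, -⟩, d₀, hd₀⟩ := ha
  obtain ⟨d, hd, hd1, hsize⟩ := exists_le_blockSize (Fintype.card α) hε d₀
  have hm := blockSize_sq_le hd1
  have hm1 : (1 : ℝ) ≤ blockSize d := by
    exact_mod_cast (Fintype.card_pos : 0 < Fintype.card (Coord d → Bool))
  have hR : (1 : ℝ) ≤ #(incPairs (host d)) := le_trans (one_le_pow₀ hm1) hm
  refine ⟨d, by exact_mod_cast hR, fun S H hH hS hcard => ?_⟩
  obtain ⟨T, hTS, hT, hext⟩ := exists_trim α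
    (fun v : BlockVert d (blockSize d) => (ofLex v).1)
    (fun v w h => by
      by_cases h' : (ofLex v).1 = (ofLex w).1
      · exact h'.le
      · exact ((blockVert_lt_iff h').1 (lt_of_le_of_ne h (fun h'' => h' (h'' ▸ rfl)))).le) S
  let H' : SimpleGraph (BlockVert d (blockSize d)) :=
    { Adj := fun v w => H.Adj v w ∧ v ∈ T ∧ w ∈ T
      symm := ⟨fun _ _ h => ⟨h.1.symm, h.2.2, h.2.1⟩⟩
      loopless := ⟨fun _ h => H.loopless.irrefl _ h.1⟩ }
  have hloss : #(incPairs H) ≤ #(incPairs H') +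
      2 * (Fintype.card α * (Fintype.card (Cube d) + 1)) *
        Fintype.card (BlockVert d (blockSize d)) :=
    (card_incPairs_le_trim H S T hS H' fun v w => Iff.rfl).trans (by gcongr)
  have hV : Fintype.card (BlockVert d (blockSize d)) = 2 ^ d * blockSize d := by
    change Fintype.card (Cube d × Fin (blockSize d)) = _
    rw [Fintype.card_prod, Fintype.card_fin]
    congr 1
    change Fintype.card (Fin d → Bool) = _
    simp
  have hX : Fintype.card (Cube d) = 2 ^ d := by
    change Fintype.card (Fin d → Bool) = _
    simp
  have hlossR : (2 * (Fintype.card α * (Fintype.card (Cube d) + 1)) *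
      Fintype.card (BlockVert d (blockSize d)) : ℝ) ≤ ε * #(incPairs (host d)) := by
    have h2 : (1 : ℝ) ≤ 2 ^ d := one_le_pow₀ (by norm_num)
    have h4 : (4 : ℝ) ^ d = 2 ^ d * 2 ^ d := by rw [← mul_pow]; norm_num
    rw [hV, hX]
    push_cast
    calc (2 * (Fintype.card α * (2 ^ d + 1)) * (2 ^ d * blockSize d) : ℝ)
        ≤ 2 * (Fintype.card α * (2 ^ d + 2 ^ d)) * (2 ^ d * blockSize d) := by
          gcongr
      _ = (4 * Fintype.card α * 4 ^ d) * blockSize d := by rw [h4]; ring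
      _ ≤ ε * blockSize d * blockSize d := by gcongr
      _ = ε * (blockSize d : ℝ) ^ 2 := by ring
      _ ≤ _ := by gcongr
  have hH'card : a * #(incPairs (host d)) < #(incPairs H') := by
    have : (#(incPairs H) : ℝ) ≤
        #(incPairs H') + 2 * (Fintype.card α * (Fintype.card (Cube d) + 1)) *
          Fintype.card (BlockVert d (blockSize d)) := by
      exact_mod_cast hloss
    linarith
  have hTne : T.Nonempty := by
    have : (0 : ℝ) < #(incPairs H') := lt_of_le_of_lt (by positivity) hH'card
    obtain ⟨p, hp⟩ := Finset.card_pos.1 (by exact_mod_cast this)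
    exact ⟨p.1, (mem_incPairs.1 hp).2.2.1⟩
  have hH'R : H' ≤ host d := fun v w h => hH h.1
  obtain ⟨ω, hω⟩ := exists_dense_section hd1 hH'R hH'card.le
  obtain ⟨φ, hφ, hadj⟩ := hd₀ d hd _ hω
  have hmemT : ∀ u v, F.Adj u v → hostSection ω (φ u) ∈ T := fun u v h => (hadj u v h).2.1
  obtain ⟨θ, hθ, hθS, hθW⟩ := hext hTne (Finset.univ.filter fun u => ∃ v, F.Adj u v)
    (fun u => hostSection ω (φ u))
    (fun p hp => by
      obtain ⟨v, hv⟩ := (mem_filter.1 hp).2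
      exact hmemT p v hv)
    (fun p _ q _ hpq => hφ hpq)
  refine ⟨θ, hθ, hθS, fun u v huv => ?_⟩
  rw [hθW u (mem_filter.2 ⟨mem_univ _, v, huv⟩), hθW v (mem_filter.2 ⟨mem_univ _, u, huv.symm⟩)]
  exact (hadj u v huv).1

lemma card_incPairs_comap {V W : Type*} [Fintype V] [LinearOrder V] [Fintype W] [LinearOrder W]
    (e : V ≃o W) (G : SimpleGraph W) : #(incPairs (G.comap e)) = #(incPairs G) := by
  refine Finset.card_nbij (fun p => (e p.1, e p.2)) ?_ ?_ ?_
  · rintro ⟨x, y⟩ h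
    obtain ⟨h1, h2⟩ := mem_incPairs.1 h
    exact mem_incPairs.2 ⟨e.strictMono h1, h2⟩
  · rintro ⟨x, y⟩ _ ⟨x', y'⟩ _ h
    simpa using h
  · rintro ⟨x, y⟩ h
    obtain ⟨h1, h2⟩ := mem_incPairs.1 (mem_coe.1 h)
    refine ⟨(e.symm x, e.symm y), mem_coe.2 (mem_incPairs.2 ⟨e.symm.strictMono h1, ?_⟩),
      by simp⟩
    simpa using h2

/-- Every threshold is, up to `ε`, an upper bound for the relative Turán density in some host. -/
lemma exists_relTuranDensityIn_le {α : Type*} [Fintype α] [LinearOrder α] (F : SimpleGraph α)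
    {a : ℝ} (ha : a ∈ thresholds F) {ε : ℝ} (hε : 0 < ε) :
    ∃ (n : ℕ) (G : SimpleGraph (Fin n)), 1 ≤ edgeCount G ∧
      relTuranDensityIn F G ≤ a + ε := by
  obtain ⟨d, hR, h⟩ := exists_copy_in_host F ha hε
  let e := Fintype.orderIsoFinOfCardEq (BlockVert d (blockSize d)) rfl
  refine ⟨_, (host d).comap e, ?_, ?_⟩
  · rw [edgeCount_eq_card, card_incPairs_comap]
    exact hR
  · refine Real.sSup_le ?_ (by have := ha.1.1; linarith)
    rintro r ⟨G', hfree, rfl⟩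
    rw [edgeCount_coe_eq_card, edgeCount_eq_card, card_incPairs_comap]
    by_contra! hlt
    have hR0 : (0 : ℝ) < #(incPairs (host d)) := by exact_mod_cast hR
    rw [lt_div_iff₀ hR0, ← card_incPairs_comap e.symm] at hlt
    obtain ⟨θ, hθ, hθS, hadj⟩ := h (Finset.univ.filter fun v => e.symm v ∈ G'.verts)
      (G'.spanningCoe.comap e.symm)
      (fun v w hvw => by
        have := G'.adj_sub hvw
        rw [SimpleGraph.comap_adj] at this
        exact (e.apply_symm_apply v) ▸ (e.apply_symm_apply w) ▸ this)
      (fun v w hvw => mem_filter.2 ⟨mem_univ _, G'.edge_vert hvw⟩) hlt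
    refine hfree ⟨fun u => ⟨e.symm (θ u), (mem_filter.1 (hθS u)).2⟩, fun u v huv => ?_, hadj⟩
    exact e.symm.strictMono (hθ huv)

/-- For every ordered graph `F`, `ρ_<(F)` equals the infimum of all
`α ∈ [0,1]` such that, for all sufficiently large `d`, every graph `G` on `{0,1}^d` with
`(1/d)·Σ_{ℓ=1}^d e_ℓ(G)/τ_{ℓ,d} ≥ α` contains an ordered copy of `F`. -/
theorem rho_eq_inf_average_rich
    {α : Type*} [Fintype α] [LinearOrder α] (F : SimpleGraph α) :
    relTuranDensity F =
      sInf {a : ℝ | a ∈ Set.Icc (0 : ℝ) 1 ∧ ∃ d₀ : ℕ, ∀ d ≥ d₀, ∀ G : SimpleGraph (Cube d),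
        a ≤ (1 / (d : ℝ)) * ∑ ℓ ∈ Finset.Icc 1 d, (levelCount G ℓ : ℝ) / (tau d ℓ : ℝ) →
        ContainsOrderedCopy F G} := by
  change relTuranDensity F = sInf (thresholds F)
  have hbdd : BddBelow {r : ℝ | ∃ (n : ℕ) (G : SimpleGraph (Fin n)),
      1 ≤ edgeCount G ∧ r = relTuranDensityIn F G} := by
    refine ⟨0, ?_⟩
    rintro r ⟨n, G, -, rfl⟩
    exact relTuranDensityIn_nonneg F G
  apply le_antisymm
  · refine le_csInf ⟨1, one_mem_thresholds F⟩ fun a ha => le_of_forall_pos_le_add fun ε hε => ?_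
    obtain ⟨n, G, hG, hle⟩ := exists_relTuranDensityIn_le F ha hε
    exact (csInf_le hbdd ⟨n, G, hG, rfl⟩).trans hle
  · obtain ⟨n, G, hG, -⟩ := exists_relTuranDensityIn_le F (one_mem_thresholds F) one_pos
    refine le_csInf ⟨_, n, G, hG, rfl⟩ ?_
    rintro r ⟨n, G, hG, rfl⟩
    exact sInf_thresholds_le F G hG
end

section
/- For every ordered graph H and every ε > 0 there exists C ∈ ℕ such that for every d ∈ ℕ and every subset 𝓛 ⊆ [d] with |𝓛| ≥ C, there exists a (finitely supported) probability distribution Φ over strictly order-preserving injections φ : V(H) → {0,1}^d with the following property: for all but at most ε·|𝓛| levels ℓ ∈ 𝓛, for all but at most ε·τ_{ℓ,d} pairs x < y in {0,1}^d with δ(x,y) = ℓ, the probability that there is an edge uv of H (with u < v) such that φ(u) = x and φ(v) = y is at least (1−ε)·e(H)/(|𝓛|·τ_{ℓ,d}). -/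
/-! The copies of `H` are placed along a random caterpillar. Given levels `P a` (`a ∈ V(H)`),
increasing in `a`, a spine `z` and tails `w a` of uniform random bits, vertex `a` follows `z`
(with its bit set to `1` at every chosen level) strictly before `P a`, has bit `0` at `P a`, and
then follows its own tail `w a`. For `i < j` the images of `i` and `j` then split exactly at
`P i`, so the map is strictly increasing.

The levels are chosen as follows. The set `𝓛` is cut into consecutive blocks of a large constant
length `K`, a starting block `s` is chosen uniformly, and the level of the vertex of rank `ρ` is
uniform in block `s + ρ`. Every level in a block away from both ends of `𝓛` is then the splitting
level of a given pair of vertices with the same probability `1 / (m * K) ≥ 1 / |𝓛|`, where `m` is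
the number of possible starting blocks.

Fix `i < j` and a pair `x < y` splitting at a level of `𝓛`. For fixed levels, `(x, y)` is hit
either with probability `0` or with probability `2 ^ #{a < j} / τ` (`branch_count`); the latter
holds exactly when `P i` is the splitting position, `y` has bit `1` at each `P a`, `a < j`, and `y`
has bit `0` at `P j`. If `y` has nearly as many zeros as ones on each of the blocks involved, a
fraction of about `2 ^ (-#{a < j})` of all choices of levels is admissible, so the two factors cancel and the
probability is at least `(1 - η) ^ |V(H)| / (m * K * τ)` (`pair_prob`). A second-moment bound
(`card_unbalanced`) shows that all but few `y` are balanced on the `O(|V(H)|)` blocks near the one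
in question; the remaining pairs form the exceptional set (`exceptional_card`). Finally, the events
belonging to different edges of `H` are disjoint, since the maps are injective, so the bounds add
up over `E(H)` (`edgeCount_mul_le`).
-/

open scoped Classical

/-! ### Caterpillar embeddings -/

/-- The image of the vertex `a` under the caterpillar embedding with branching positions `P`,
spine `ω.1` and tails `ω.2`: before `P a` it is the spine with ones written at all branching
positions, at `P a` it is `0`, and after `P a` it is the tail `ω.2 a`. The branching positions
above `P a` do not matter for this vertex. -/
noncomputable def branch {α : Type*} [LinearOrder α] {d : ℕ} (P : α → Fin d)
    (ω : (Fin d → Bool) × (α → Fin d → Bool)) (a : α) : Fin d → Bool := fun q =>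
  if q < P a then (if q ∈ Set.range P then true else ω.1 q)
  else if q = P a then false else ω.2 a q

theorem cube_lt_of {d : ℕ} {x y : Cube d} (p : Fin d) (hx : ofLex x p = false)
    (hy : ofLex y p = true) (h : ∀ q < p, ofLex x q = ofLex y q) : x < y := by
  refine ⟨p, h, ?_⟩
  change ofLex x p < ofLex y p
  rw [hx, hy]; decide

theorem bits_of_lt {d ℓ : ℕ} {x y : Cube d} (hlt : x < y) (hl : atLevel ℓ x y) :
    ∃ p : Fin d, (p : ℕ) + 1 = ℓ ∧ ofLex x p = false ∧ ofLex y p = true ∧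
      ∀ q < p, ofLex x q = ofLex y q := by
  obtain ⟨p, hp, hne, hag⟩ := hl
  refine ⟨p, hp, ?_⟩
  rcases hx : ofLex x p with _ | _ <;> rcases hy : ofLex y p with _ | _
  · simp_all
  · exact ⟨rfl, rfl, hag⟩
  · exact absurd hlt (lt_asymm (cube_lt_of p hy hx fun q hq => (hag q hq).symm))
  · simp_all

theorem branch_strictMono {α : Type*} [LinearOrder α] {d : ℕ} {P : α → Fin d}
    (hP : StrictMono P) (ω : (Fin d → Bool) × (α → Fin d → Bool)) :
    StrictMono (fun a => (toLex (branch P ω a) : Cube d)) := by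
  intro a b hab
  have hlt := hP hab
  refine cube_lt_of (P a) ?_ ?_ ?_
  · simp [branch]
  · simp [branch, hlt]
  · intro q hq
    simp [branch, hq, hq.trans hlt]

/-- Prescribing the bits on `S` divides the number of bit strings by `2 ^ |S|`. -/
theorem card_agree {d : ℕ} (S : Finset (Fin d)) (g : Fin d → Bool) :
    (Finset.univ.filter (fun f : Fin d → Bool => ∀ q ∈ S, f q = g q)).card * 2 ^ S.card
      = 2 ^ d := by
  have h : Finset.univ.filter (fun f : Fin d → Bool => ∀ q ∈ S, f q = g q)
      = Fintype.piFinset (fun q => if q ∈ S then {g q} else Finset.univ) := by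
    ext f
    simp only [Finset.mem_filter, Finset.mem_univ, true_and, Fintype.mem_piFinset]
    refine forall_congr' fun q => ?_
    by_cases hq : q ∈ S <;> simp [hq]
  have h2 : (2 : ℕ) ^ S.card = ∏ q : Fin d, if q ∈ S then 2 else 1 := by
    simp
  rw [h, Fintype.card_piFinset, h2, ← Finset.prod_mul_distrib]
  rw [Finset.prod_congr rfl (g := fun _ => 2)]
  · simp
  · intro q _
    by_cases hq : q ∈ S <;> simp [hq]

/-- For fixed branching positions compatible with the pair `(x, y)`, the pair is the image of
`(i, j)` with probability at least `2 ^ #{a < j} / τ`. It suffices that the spine agrees with `y`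
at the non-branching positions before `P j`, that the tail of `i` agrees with `x` after `P i`, and
that the tail of `j` agrees with `y` after `P j`; this prescribes `2d - 2 - P i - #{a < j}` bits in
total. -/
theorem branch_count {α : Type*} [Fintype α] [LinearOrder α] {d : ℕ} {P : α → Fin d}
    (hP : StrictMono P) {i j : α} (hij : i < j) {x y : Fin d → Bool}
    (hx : x (P i) = false) (hag : ∀ q < P i, x q = y q)
    (h1 : ∀ a < j, y (P a) = true) (h0 : y (P j) = false) :
    2 ^ (Finset.univ.filter (fun a : α => a < j)).card *
        Fintype.card ((Fin d → Bool) × (α → Fin d → Bool)) ≤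
      (Finset.univ.filter (fun ω : (Fin d → Bool) × (α → Fin d → Bool) =>
        branch P ω i = x ∧ branch P ω j = y)).card * 2 ^ (2 * d - 2 - (P i : ℕ)) := by
  set J := Finset.univ.filter (fun a : α => a < j) with hJ
  set S : Finset (Fin d) := Finset.Iio (P j) \ J.image P with hS
  set T : α → Finset (Fin d) := fun k =>
    if k = i then Finset.Ioi (P i) else if k = j then Finset.Ioi (P j) else ∅ with hT
  set g : α → Fin d → Bool := fun k => if k = i then x else y with hg
  have hPij : P i < P j := hP hij
  have hsub : (Finset.univ.filter (fun f : Fin d → Bool => ∀ q ∈ S, f q = y q)) ×ˢ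
      Fintype.piFinset (fun k => Finset.univ.filter
        (fun f : Fin d → Bool => ∀ q ∈ T k, f q = g k q)) ⊆
      Finset.univ.filter (fun ω : (Fin d → Bool) × (α → Fin d → Bool) =>
        branch P ω i = x ∧ branch P ω j = y) := by
    rintro ⟨z, w⟩ hzw
    simp only [Finset.mem_product, Finset.mem_filter, Finset.mem_univ, true_and,
      Fintype.mem_piFinset] at hzw ⊢
    obtain ⟨hz, hw⟩ := hzw
    have key : ∀ q < P j, (if q ∈ Set.range P then true else z q) = y q := by
      intro q hq
      split_ifs with hr
      · obtain ⟨a, rfl⟩ := hr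
        exact (h1 a (hP.lt_iff_lt.1 hq)).symm
      · apply hz
        simp only [hS, Finset.mem_sdiff, Finset.mem_Iio, Finset.mem_image, not_exists, not_and]
        exact ⟨hq, fun a _ ha => hr ⟨a, ha⟩⟩
    have hwi := hw i
    have hwj := hw j
    simp only [hT, hg, if_true, hij.ne', if_false, Finset.mem_Ioi] at hwi hwj
    constructor
    · ext1 q
      rcases lt_trichotomy q (P i) with hq | hq | hq
      · simp only [branch, hq, if_true]
        rw [key q (hq.trans hPij), hag q hq]
      · subst hq; simp [branch, hx]
      · simp only [branch, hq.not_gt, hq.ne', if_false]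
        exact hwi q hq
    · ext1 q
      rcases lt_trichotomy q (P j) with hq | hq | hq
      · simp only [branch, hq, if_true]
        rw [key q hq]
      · subst hq; simp [branch, h0]
      · simp only [branch, hq.not_gt, hq.ne', if_false]
        exact hwj q hq
  have hcard := Finset.card_le_card hsub
  rw [Finset.card_product, Fintype.card_piFinset] at hcard
  have hSc : S.card + J.card = P j := by
    have : J.image P ⊆ Finset.Iio (P j) := by
      intro q hq
      obtain ⟨a, ha, rfl⟩ := Finset.mem_image.1 hq
      simp only [hJ, Finset.mem_filter, Finset.mem_univ, true_and] at ha
      simpa using hP ha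
    rw [← Finset.card_image_of_injective J hP.injective, hS, Finset.card_sdiff_add_card_eq_card this]
    simp
  have hTc : ∑ k, (T k).card = (d - 1 - (P i : ℕ)) + (d - 1 - (P j : ℕ)) := by
    rw [Fintype.sum_eq_add i j hij.ne]
    · simp [hT, hij.ne']
    · rintro k ⟨h1, h2⟩
      simp [hT, h1, h2]
  have hprod : (∏ k, (Finset.univ.filter
        (fun f : Fin d → Bool => ∀ q ∈ T k, f q = g k q)).card) *
        2 ^ ((d - 1 - (P i : ℕ)) + (d - 1 - (P j : ℕ))) = Fintype.card (α → Fin d → Bool) := by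
    rw [← hTc, ← Finset.prod_pow_eq_pow_sum, ← Finset.prod_mul_distrib]
    simp_rw [card_agree]
    simp
  have hz := card_agree S y
  have hexp : 2 * d - 2 - (P i : ℕ) =
      J.card + S.card + ((d - 1 - (P i : ℕ)) + (d - 1 - (P j : ℕ))) := by
    have := (P i).2; have := (P j).2; omega
  rw [Fintype.card_prod, ← hprod]
  have hd : Fintype.card (Fin d → Bool) = 2 ^ d := by simp
  rw [hd, ← hz, hexp, pow_add, pow_add]
  calc _ = _ := by ring
    _ ≤ _ := Nat.mul_le_mul_right _ hcard

/-! ### Balanced strings -/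

/-- The bit `b` as a sign: `1` for `true` and `-1` for `false`. -/
def sgn (b : Bool) : ℝ := if b then 1 else -1

/-- The coordinate signs at distinct positions are orthogonal on the cube. -/
theorem sum_sgn_sq {d K : ℕ} {Q : Fin K → Fin d} (hQ : Function.Injective Q) :
    ∑ y : Fin d → Bool, (∑ k, sgn (y (Q k))) ^ 2 = K * 2 ^ d := by
  have horth : ∀ k l : Fin K, ∑ y : Fin d → Bool, sgn (y (Q k)) * sgn (y (Q l))
      = if k = l then 2 ^ d else 0 := by
    intro k l
    split_ifs with h
    · subst h
      rw [Finset.sum_congr rfl (g := fun _ => 1)]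
      · simp
      · intro y _; unfold sgn; split_ifs <;> norm_num
    · have hne : Q l ≠ Q k := fun hh => h (hQ hh).symm
      -- flipping the bit at `Q k` changes the sign of the summand
      refine Finset.sum_involution (fun y _ => Function.update y (Q k) (!(y (Q k)))) ?_ ?_ ?_ ?_
      · intro y _
        simp only [Function.update_self, Function.update_of_ne hne]
        unfold sgn
        cases y (Q k) <;> cases y (Q l) <;> simp
      · intro y _ _ hy
        have := congrFun hy (Q k)
        simp at this
      · simp
      · intro y _
        simp
  simp_rw [sq, Finset.sum_mul_sum]
  rw [Finset.sum_comm]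
  simp_rw [Finset.sum_comm (s := (Finset.univ : Finset (Fin d → Bool))), horth]
  simp

/-- Chebyshev's inequality for the sum of the signs of a string at `K` positions. -/
theorem card_unbalanced {d K : ℕ} (hK : 0 < K) {Q : Fin K → Fin d} (hQ : Function.Injective Q)
    {η : ℝ} (hη : 0 < η) :
    ((Finset.univ.filter (fun y : Fin d → Bool => η * K < |∑ k, sgn (y (Q k))|)).card : ℝ)
      ≤ 2 ^ d / (η ^ 2 * K) := by
  set B := Finset.univ.filter (fun y : Fin d → Bool => η * K < |∑ k, sgn (y (Q k))|)
  have hK' : (0 : ℝ) < K := by exact_mod_cast hK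
  have h : (B.card : ℝ) * (η * K) ^ 2 ≤ K * 2 ^ d := by
    rw [← sum_sgn_sq hQ, ← nsmul_eq_mul]
    refine (Finset.card_nsmul_le_sum B _ _ fun y hy => ?_).trans
      (Finset.sum_le_sum_of_subset_of_nonneg (Finset.subset_univ _) fun _ _ _ => sq_nonneg _)
    rw [← sq_abs (∑ k, sgn (y (Q k)))]
    exact pow_le_pow_left₀ (by positivity) (Finset.mem_filter.1 hy).2.le 2
  rw [le_div_iff₀ (by positivity)]
  refine le_of_mul_le_mul_right ?_ hK'
  calc _ = (B.card : ℝ) * (η * K) ^ 2 := by ring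
    _ ≤ _ := h
    _ = _ := by ring

theorem count_of_balanced {d K : ℕ} {Q : Fin K → Fin d} {η : ℝ} {y : Fin d → Bool}
    (h : |∑ k, sgn (y (Q k))| ≤ η * K) (β : Bool) :
    (1 - η) / 2 * K ≤ ((Finset.univ.filter (fun k => y (Q k) = β)).card : ℝ) := by
  have h1 : ∑ k, sgn (y (Q k)) * sgn β =
      2 * ((Finset.univ.filter (fun k => y (Q k) = β)).card : ℝ) - K := by
    have : ∀ k, sgn (y (Q k)) * sgn β = 2 * (if y (Q k) = β then 1 else 0) - 1 := by
      intro k; unfold sgn; cases y (Q k) <;> cases β <;> norm_num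
    simp_rw [this, Finset.sum_sub_distrib, ← Finset.mul_sum]
    simp
  rw [← Finset.sum_mul] at h1
  have h2 := abs_le.1 h
  cases β <;> simp only [sgn] at h1 <;> norm_num at h1 <;> simp only [sgn] at h2 <;> nlinarith

/-! ### Random levels -/

/-- The branching positions for the starting block `σ.1` and the offsets `σ.2`: `E` enumerates the
available positions, block `B` consists of the indices `B * K, …, B * K + K - 1`, and the vertex
`a` gets the element number `σ.2 a` of block `σ.1 + r a`. -/
def levels {α : Type*} {d m K : ℕ} (E : ℕ → Fin d) (r : α → ℕ) (σ : Fin m × (α → Fin K))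
    (a : α) : Fin d :=
  E ((σ.1 + r a) * K + σ.2 a)

theorem levels_strictMono {α : Type*} [LinearOrder α] {d m K n N : ℕ} {E : ℕ → Fin d}
    (hE : StrictMonoOn E (Set.Iio N)) {r : α → ℕ} (hr : StrictMono r) (hrn : ∀ a, r a < n)
    (hN : (m + n) * K ≤ N) (σ : Fin m × (α → Fin K)) : StrictMono (levels E r σ) := by
  have hlt : ∀ a, (σ.1 + r a) * K + σ.2 a < N := by
    intro a
    have h1 : ((σ.1 : ℕ) + r a + 1) * K ≤ (m + n) * K :=
      Nat.mul_le_mul_right _ (by have := hrn a; have := σ.1.2; omega)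
    have := (σ.2 a).2
    rw [add_mul _ 1] at h1
    omega
  intro a b hab
  refine hE (hlt a) (hlt b) ?_
  have h1 : ((σ.1 : ℕ) + r a + 1) * K ≤ (σ.1 + r b) * K :=
    Nat.mul_le_mul_right _ (by have := hr hab; omega)
  have := (σ.2 a).2
  rw [add_mul _ 1] at h1
  omega

/-- The probability that `(i, j)` is mapped to `(x, y)`, where `x < y` split at the element `k` of
block `s + r i` and `y` is balanced on the other blocks: only the starting block `s` and the offset
`k` for `i` are used, and at least a `((1 - η) / 2)`-fraction of the offsets is admissible for
every other `a ≤ j`. -/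
theorem pair_prob {α : Type*} [Fintype α] [LinearOrder α] {d m K n N : ℕ} {E : ℕ → Fin d}
    (hE : StrictMonoOn E (Set.Iio N)) {r : α → ℕ} (hr : StrictMono r) (hrn : ∀ a, r a < n)
    (hN : (m + n) * K ≤ N) {η : ℝ} (hη0 : 0 ≤ η) (hη : η ≤ 1) (s : Fin m) (k : Fin K)
    {i j : α} (hij : i < j) {x y : Fin d → Bool} {p : Fin d}
    (hp : E ((s + r i) * K + k) = p)
    (hx : x p = false) (hy : y p = true) (hag : ∀ q < p, x q = y q)
    (hbal : ∀ a, a ≠ i → ∀ β : Bool, (1 - η) / 2 * K ≤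
      ((Finset.univ.filter (fun t : Fin K => y (E ((s + r a) * K + t)) = β)).card : ℝ)) :
    (1 - η) ^ Fintype.card α / (m * K * 2 ^ (2 * d - 2 - (p : ℕ))) ≤
      ((Finset.univ.filter (fun ω : (Fin m × (α → Fin K)) × ((Fin d → Bool) × (α → Fin d → Bool)) =>
        branch (levels E r ω.1) ω.2 i = x ∧ branch (levels E r ω.1) ω.2 j = y)).card : ℝ) /
      Fintype.card ((Fin m × (α → Fin K)) × ((Fin d → Bool) × (α → Fin d → Bool))) := by
  have hK : (0 : ℝ) < K := by exact_mod_cast k.pos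
  have hm : (0 : ℝ) < m := by exact_mod_cast s.pos
  set D : α → Finset (Fin K) := fun a =>
    if a = i then {k} else if a < j then
      Finset.univ.filter (fun t : Fin K => y (E ((s + r a) * K + t)) = true)
    else if a = j then Finset.univ.filter (fun t : Fin K => y (E ((s + r a) * K + t)) = false)
    else Finset.univ with hD
  set T : ℝ := 2 ^ (2 * d - 2 - (p : ℕ)) with hT
  have hT0 : 0 < T := by positivity
  set J := (Finset.univ.filter (fun a : α => a < j)).card with hJ
  set W : ℝ := (Fintype.card ((Fin d → Bool) × (α → Fin d → Bool)) : ℝ) with hW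
  have hW0 : 0 < W := by
    rw [hW]; exact_mod_cast Fintype.card_pos
  -- each admissible choice of levels contributes the same number of bit arrays
  have hfib : ∀ c ∈ Fintype.piFinset D, 2 ^ J * W / T ≤
      ((Finset.univ.filter (fun ω : (Fin d → Bool) × (α → Fin d → Bool) =>
        branch (levels E r (s, c)) ω i = x ∧ branch (levels E r (s, c)) ω j = y)).card : ℝ) := by
    intro c hc
    rw [Fintype.mem_piFinset] at hc
    have hci : levels E r (s, c) i = p := by
      have := hc i
      simp only [hD, if_true, Finset.mem_singleton] at this
      simp only [levels, this, hp]
    rw [div_le_iff₀ hT0]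
    have h1 : ∀ a < j, y (levels E r (s, c) a) = true := by
      intro a ha
      by_cases hai : a = i
      · rw [hai, hci, hy]
      · have := hc a
        simpa [hD, hai, ha, levels] using this
    have h0 : y (levels E r (s, c) j) = false := by
      have := hc j
      simpa [hD, hij.ne', levels] using this
    have := branch_count (levels_strictMono hE hr hrn hN (s, c)) hij (x := x) (y := y)
      (by rw [hci, hx]) (by rw [hci]; exact hag) h1 h0
    rw [hci] at this
    rw [hJ, hW, hT]
    exact_mod_cast this
  have hcount : ((Fintype.piFinset D).card : ℝ) * (2 ^ J * W / T) ≤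
      ((Finset.univ.filter (fun ω : (Fin m × (α → Fin K)) × ((Fin d → Bool) × (α → Fin d → Bool)) =>
        branch (levels E r ω.1) ω.2 i = x ∧ branch (levels E r ω.1) ω.2 j = y)).card : ℝ) := by
    rw [Finset.card_filter, Fintype.sum_prod_type, Fintype.sum_prod_type]
    push_cast
    rw [← nsmul_eq_mul]
    refine (Finset.card_nsmul_le_sum _ _ _ hfib).trans ?_
    refine le_trans ?_ (Finset.single_le_sum (fun _ _ => by positivity) (Finset.mem_univ s))
    refine le_trans ?_ (Finset.sum_le_sum_of_subset_of_nonneg (Finset.subset_univ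
      (Fintype.piFinset D)) (fun _ _ _ => by positivity))
    refine Finset.sum_le_sum fun c _ => ?_
    rw [Finset.card_filter]
    push_cast
    exact le_rfl
  have hDcard : (1 - η) ^ Fintype.card α * (K : ℝ) ^ Fintype.card α ≤
      ((Fintype.piFinset D).card : ℝ) * 2 ^ J * K := by
    have h2 : (2 : ℝ) ^ J = ∏ a : α, if a < j then (2 : ℝ) else 1 := by
      simp [hJ, Finset.prod_ite]
    have h3 : (2 : ℝ) * K = ∏ a : α, (if a = i then (K : ℝ) else 1) * (if a = j then 2 else 1) := by
      rw [Finset.prod_mul_distrib]; simp [mul_comm]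
    -- the additional factor `2` at `a = i` makes both sides products over all vertices
    have h4 : (2 : ℝ) = ∏ a : α, (if a = i then (2 : ℝ) else 1) := by simp
    have h5 : (1 - η) ^ Fintype.card α * (K : ℝ) ^ Fintype.card α * 2 ≤
        ((Fintype.piFinset D).card : ℝ) * 2 ^ J * (2 * K) := by
      rw [Fintype.card_piFinset, h2, h3, ← mul_pow]
      nth_rewrite 1 [h4]
      have h6 : ((1 - η) * (K : ℝ)) ^ Fintype.card α = ∏ a : α, (1 - η) * (K : ℝ) := by simp
      rw [h6]
      push_cast
      rw [← Finset.prod_mul_distrib, ← Finset.prod_mul_distrib, ← Finset.prod_mul_distrib]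
      refine Finset.prod_le_prod (fun a _ => ?_) fun a _ => ?_
      · have : 0 ≤ 1 - η := by linarith
        split_ifs <;> positivity
      · by_cases hai : a = i
        · subst hai
          simp [hD, hij, hij.ne]
          nlinarith
        · rcases lt_trichotomy a j with haj | haj | haj
          · have := hbal a hai true
            simp [hD, hai, haj, haj.ne]
            linarith
          · subst haj
            have := hbal a hai false
            simp [hD, hai]
            linarith
          · simp [hD, hai, haj.not_gt, haj.ne']
            nlinarith
    linarith
  have hcard : (Fintype.card ((Fin m × (α → Fin K)) × ((Fin d → Bool) × (α → Fin d → Bool))) : ℝ)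
      = m * K ^ Fintype.card α * W := by
    rw [Fintype.card_prod, Fintype.card_prod]
    simp [hW]
  rw [hcard, div_le_div_iff₀ (by positivity) (by positivity)]
  calc (1 - η) ^ Fintype.card α * (m * K ^ Fintype.card α * W)
      = ((1 - η) ^ Fintype.card α * K ^ Fintype.card α) * (m * W) := by ring
    _ ≤ (((Fintype.piFinset D).card : ℝ) * 2 ^ J * K) * (m * W) := by gcongr
    _ = (((Fintype.piFinset D).card : ℝ) * (2 ^ J * W / T)) * (m * K * T) := by
        field_simp
    _ ≤ _ := by gcongr

/-! ### Assembling the distribution -/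

/-- The distribution of `F ω` for uniformly random `ω`. -/
theorem exists_pushforward {Ω β : Type*} [Fintype Ω] [Nonempty Ω] [Fintype β] (F : Ω → β) :
    ∃ μ : β → ℝ, (∀ b, 0 ≤ μ b) ∧ ∑ b, μ b = 1 ∧ (∀ b, μ b ≠ 0 → ∃ ω, F ω = b) ∧
      ∀ Q : β → Prop, ∑ b ∈ Finset.univ.filter Q, μ b =
        ((Finset.univ.filter (fun ω => Q (F ω))).card : ℝ) / Fintype.card Ω := by
  have hQ : ∀ Q : β → Prop, ∑ b ∈ Finset.univ.filter Q,
      ((Finset.univ.filter (fun ω => F ω = b)).card : ℝ) / Fintype.card Ω =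
        ((Finset.univ.filter (fun ω => Q (F ω))).card : ℝ) / Fintype.card Ω := by
    intro Q
    rw [← Finset.sum_div, Finset.card_eq_sum_card_fiberwise (f := F) (t := Finset.univ.filter Q)
      (s := Finset.univ.filter (fun ω => Q (F ω)))]
    · push_cast
      congr 1
      refine Finset.sum_congr rfl fun b hb => ?_
      congr 2
      ext ω
      simp only [Finset.mem_filter, Finset.mem_univ, true_and] at hb ⊢
      constructor
      · rintro rfl; exact ⟨hb, rfl⟩
      · exact fun h => h.2
    · intro ω hω
      simpa using hω
  refine ⟨fun b => ((Finset.univ.filter (fun ω => F ω = b)).card : ℝ) / Fintype.card Ω,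
    fun b => by positivity, ?_, ?_, hQ⟩
  · have := hQ (fun _ => True)
    simpa using this
  · intro b hb
    by_contra hne
    push Not at hne
    simp [hne] at hb

/-- An increasing enumeration of `L ⊆ [d]`, as positions counted from `0` (the level is the
position plus one). Its values at indices `≥ |L|` are irrelevant. -/
theorem exists_enum {d : ℕ} {L : Finset ℕ} (hL : L ⊆ Finset.Icc 1 d) (h0 : 0 < L.card) :
    ∃ E : ℕ → Fin d, StrictMonoOn E (Set.Iio L.card) ∧ ∀ t < L.card, (E t : ℕ) + 1 ∈ L := by
  have hd : ∀ ℓ ∈ L, ℓ - 1 < d ∧ 1 ≤ ℓ := by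
    intro ℓ hℓ
    have := Finset.mem_Icc.1 (hL hℓ); omega
  set f := L.orderEmbOfFin rfl
  have hf : ∀ t, f t ∈ L := fun t => L.orderEmbOfFin_mem rfl t
  have hd0 : 0 < d := by
    have := hd _ (hf ⟨0, h0⟩); omega
  refine ⟨fun t => if h : t < L.card then ⟨f ⟨t, h⟩ - 1, (hd _ (hf _)).1⟩ else ⟨0, hd0⟩, ?_, ?_⟩
  · intro a ha b hb hab
    simp only [Set.mem_Iio] at ha hb
    have h1 : f ⟨a, ha⟩ < f ⟨b, hb⟩ := f.strictMono hab
    have := hd _ (hf ⟨a, ha⟩)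
    simp only [ha, hb, dif_pos, Fin.mk_lt_mk]
    omega
  · intro t ht
    have := (hd _ (hf ⟨t, ht⟩)).2
    simp only [ht, dif_pos]
    rw [Nat.sub_add_cancel this]
    exact hf _

/-- The events that different edges of `H` are mapped onto `(x, y)` are disjoint, so lower bounds
for their probabilities add up. -/
theorem edgeCount_mul_le {α Ω β : Type*} [Fintype α] [LinearOrder α] [Fintype Ω]
    (H : SimpleGraph α) (F : Ω → α → β) (hF : ∀ ω, Function.Injective (F ω)) (x y : β) {c : ℝ}
    (hc : ∀ i j, i < j → c ≤
      ((Finset.univ.filter (fun ω => F ω i = x ∧ F ω j = y)).card : ℝ) / Fintype.card Ω) :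
    (edgeCount H : ℝ) * c ≤ ((Finset.univ.filter (fun ω => ∃ u v, H.Adj u v ∧ u < v ∧
      F ω u = x ∧ F ω v = y)).card : ℝ) / Fintype.card Ω := by
  set A := Finset.univ.filter (fun e : α × α => H.Adj e.1 e.2 ∧ e.1 < e.2) with hA
  have hEA : edgeCount H = A.card := by
    have h1 : H.edgeSet = ((A.image (fun e => s(e.1, e.2)) : Finset (Sym2 α)) : Set (Sym2 α)) := by
      ext e
      induction e using Sym2.ind with
      | _ u v =>
        simp only [SimpleGraph.mem_edgeSet, Finset.coe_image, Set.mem_image, Finset.mem_coe, hA,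
          Finset.mem_filter, Finset.mem_univ, true_and]
        constructor
        · intro h
          rcases lt_or_gt_of_ne h.ne with hlt | hlt
          · exact ⟨(u, v), ⟨h, hlt⟩, rfl⟩
          · exact ⟨(v, u), ⟨h.symm, hlt⟩, Sym2.eq_swap⟩
        · rintro ⟨⟨a, b⟩, ⟨h, -⟩, he⟩
          rwa [← SimpleGraph.mem_edgeSet, ← he]
    rw [edgeCount, h1, Set.ncard_coe_finset, Finset.card_image_of_injOn]
    rintro ⟨a, b⟩ hab ⟨a', b'⟩ hab' h
    simp only [hA, Finset.coe_filter, Finset.mem_univ, true_and, Set.mem_ofPred_eq] at hab hab'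
    rcases Sym2.eq_iff.1 h with ⟨rfl, rfl⟩ | ⟨rfl, rfl⟩
    · rfl
    · exact absurd hab.2 hab'.2.not_gt
  have hU : Finset.univ.filter (fun ω => ∃ u v, H.Adj u v ∧ u < v ∧ F ω u = x ∧ F ω v = y) =
      A.biUnion (fun e => Finset.univ.filter (fun ω => F ω e.1 = x ∧ F ω e.2 = y)) := by
    ext ω
    simp [hA, and_assoc]
  rw [hU, Finset.card_biUnion, hEA]
  · push_cast
    rw [Finset.sum_div, ← nsmul_eq_mul]
    refine Finset.card_nsmul_le_sum _ _ _ fun e he => hc _ _ ?_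
    exact (Finset.mem_filter.1 he).2.2
  · rintro ⟨a, b⟩ - ⟨a', b'⟩ - hne
    rw [Function.onFun, Finset.disjoint_left]
    intro ω h h'
    simp only [Finset.mem_filter, Finset.mem_univ, true_and] at h h'
    exact hne (Prod.ext (hF ω (h.1.trans h'.1.symm)) (hF ω (h.2.trans h'.2.symm)))

/-- The exceptional pairs at position `p`: those whose larger element `y` is unbalanced on one of
the blocks `b - n, …, b + n - 1`. Each `y` occurs in at most `2 ^ (d - 1 - p)` pairs, so it suffices
to count the unbalanced `y`. -/
theorem exceptional_card {d n K M N b : ℕ} (hK : 0 < K) {E : ℕ → Fin d}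
    (hE : StrictMonoOn E (Set.Iio N)) (hMN : M * K ≤ N) (hb : b + n ≤ M) {η ε : ℝ}
    (hη : 0 < η) (hKε : 4 * n ≤ ε * (η ^ 2 * K)) (p : Fin d) :
    ∃ Z : Set (Cube d × Cube d), (Z.ncard : ℝ) ≤ ε * 2 ^ (2 * d - 2 - (p : ℕ)) ∧
      ∀ x y : Cube d, (x, y) ∉ Z → ofLex x p = false → (∀ q < p, ofLex x q = ofLex y q) →
        ∀ B ∈ Finset.Ico (b - n) (b + n),
          |∑ k : Fin K, sgn (ofLex y (E (B * K + k)))| ≤ η * K := by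
  -- `bad B`: strings unbalanced on block `B`; `A y`: the lower partners of `y` at position `p`
  set bad : ℕ → Finset (Fin d → Bool) := fun B => Finset.univ.filter
    (fun y => η * K < |∑ k : Fin K, sgn (y (E (B * K + k)))|) with hbad
  set Bad := (Finset.Ico (b - n) (b + n)).biUnion bad with hBad
  set A : (Fin d → Bool) → Finset (Fin d → Bool) := fun y => Finset.univ.filter
    (fun x => ∀ q ∈ Finset.Iic p, x q = if q = p then false else y q) with hA
  have hK' : (0 : ℝ) < K := by exact_mod_cast hK
  have hAcard : ∀ y, (A y).card = 2 ^ (d - 1 - (p : ℕ)) := by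
    intro y
    have h := card_agree (Finset.Iic p) (fun q => if q = p then false else y q)
    have hp := p.2
    have h2 : (2 : ℕ) ^ d = 2 ^ (d - 1 - (p : ℕ)) * 2 ^ ((p : ℕ) + 1) := by
      rw [← pow_add]; congr 1; omega
    rw [h2, Fin.card_Iic] at h
    exact Nat.eq_of_mul_eq_mul_right (by positivity) h
  have hBadcard : (Bad.card : ℝ) ≤ 2 * n * (2 ^ d / (η ^ 2 * K)) := by
    have h1 : (Bad.card : ℝ) ≤ ∑ B ∈ Finset.Ico (b - n) (b + n), ((bad B).card : ℝ) := by
      exact_mod_cast Finset.card_biUnion_le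
    have h2 : ∀ B ∈ Finset.Ico (b - n) (b + n), ((bad B).card : ℝ) ≤ 2 ^ d / (η ^ 2 * K) := by
      intro B hB
      refine card_unbalanced hK (Q := fun k : Fin K => E (B * K + k)) ?_ hη
      intro k l hkl
      have hlt : ∀ k : Fin K, B * K + k < N := by
        intro k
        have h3 : (B + 1) * K ≤ M * K :=
          Nat.mul_le_mul_right _ (by have := (Finset.mem_Ico.1 hB).2; omega)
        have := k.2
        rw [add_mul] at h3; omega
      have := hE.injOn (hlt k) (hlt l) hkl
      exact Fin.ext (by omega)
    refine h1.trans ((Finset.sum_le_card_nsmul _ _ _ h2).trans ?_)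
    rw [nsmul_eq_mul, Nat.card_Ico]
    refine mul_le_mul_of_nonneg_right ?_ (by positivity)
    have : b + n - (b - n) ≤ 2 * n := by omega
    exact_mod_cast this
  refine ⟨((Bad.biUnion fun y => (A y).image fun x => ((toLex x, toLex y) : Cube d × Cube d) :
    Finset (Cube d × Cube d)) : Set (Cube d × Cube d)), ?_, ?_⟩
  · rw [Set.ncard_coe_finset]
    have h1 : (Bad.biUnion fun y => (A y).image
        fun x => ((toLex x, toLex y) : Cube d × Cube d)).card ≤ Bad.card * 2 ^ (d - 1 - (p : ℕ)) :=
      Finset.card_biUnion_le_card_mul _ _ _ fun y _ => Finset.card_image_le.trans (hAcard y).le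
    have h2 : (2 : ℝ) ^ d * 2 ^ (d - 1 - (p : ℕ)) = 2 * 2 ^ (2 * d - 2 - (p : ℕ)) := by
      have := p.2
      rw [← pow_add, ← pow_succ']; congr 1; omega
    calc _ ≤ (Bad.card : ℝ) * 2 ^ (d - 1 - (p : ℕ)) := by exact_mod_cast h1
      _ ≤ (2 * n * (2 ^ d / (η ^ 2 * K))) * 2 ^ (d - 1 - (p : ℕ)) := by gcongr
      _ = 2 * n * ((2 : ℝ) ^ d * 2 ^ (d - 1 - (p : ℕ))) / (η ^ 2 * K) := by ring
      _ = (4 * n) * 2 ^ (2 * d - 2 - (p : ℕ)) / (η ^ 2 * K) := by rw [h2]; ring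
      _ ≤ (ε * (η ^ 2 * K)) * 2 ^ (2 * d - 2 - (p : ℕ)) / (η ^ 2 * K) := by gcongr
      _ = _ := by field_simp
  · intro x y hxy hx hag B hB
    by_contra hcon
    push Not at hcon
    refine hxy ?_
    rw [Finset.mem_coe, Finset.mem_biUnion]
    refine ⟨ofLex y, ?_, Finset.mem_image.2 ⟨ofLex x, ?_, rfl⟩⟩
    · exact Finset.mem_biUnion.2 ⟨B, hB, Finset.mem_filter.2 ⟨Finset.mem_univ _, hcon⟩⟩
    · refine Finset.mem_filter.2 ⟨Finset.mem_univ _, fun q hq => ?_⟩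
      split_ifs with hqp
      · rw [hqp, hx]
      · exact hag q (lt_of_le_of_ne (Finset.mem_Iic.1 hq) hqp)

/-- The case `ε ≤ 1`, to which the general one reduces by monotonicity in `ε`. -/
theorem tiling_aux {α : Type*} [Fintype α] [LinearOrder α] (H : SimpleGraph α)
    (ε : ℝ) (hε : 0 < ε) (hε1 : ε ≤ 1) :
    ∃ C : ℕ, ∀ (d : ℕ) (𝓛 : Finset ℕ), 𝓛 ⊆ Finset.Icc 1 d → C ≤ 𝓛.card →
      ∃ μ : (α → Cube d) → ℝ,
        (∀ φ, 0 ≤ μ φ) ∧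
        (∑ φ : α → Cube d, μ φ) = 1 ∧
        (∀ φ, μ φ ≠ 0 → StrictMono φ) ∧
        ∃ 𝓛' ⊆ 𝓛, ((𝓛 \ 𝓛').card : ℝ) ≤ ε * (𝓛.card : ℝ) ∧
          ∀ ℓ ∈ 𝓛', ∃ Z : Set (Cube d × Cube d), (Z.ncard : ℝ) ≤ ε * (tau d ℓ : ℝ) ∧
            ∀ x y : Cube d, x < y → atLevel ℓ x y → (x, y) ∉ Z →
              (1 - ε) * (edgeCount H : ℝ) / ((𝓛.card : ℝ) * (tau d ℓ : ℝ)) ≤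
                ∑ φ ∈ Finset.univ.filter
                    (fun φ : α → Cube d => ∃ u v, H.Adj u v ∧ u < v ∧ φ u = x ∧ φ v = y),
                  μ φ := by
  set n := Fintype.card α with hn
  set r : α → ℕ := fun a => ((Fintype.orderIsoFinOfCardEq α rfl).symm a : Fin n) with hrdef
  have hr : StrictMono r := fun a b hab =>
    (Fintype.orderIsoFinOfCardEq α rfl).symm.strictMono hab
  have hrn : ∀ a, r a < n := fun a => ((Fintype.orderIsoFinOfCardEq α rfl).symm a : Fin n).2
  set η : ℝ := ε / (n + 1) with hηdef
  have hη : 0 < η := by positivity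
  have hηn : n * η ≤ ε := by
    rw [hηdef, mul_div_assoc', div_le_iff₀ (by positivity)]; nlinarith
  have hη1 : η ≤ 1 := (div_le_self hε.le (by linarith [n.cast_nonneg (α := ℝ)])).trans hε1
  have hbern : 1 - ε ≤ (1 - η) ^ n := by
    have := one_add_mul_le_pow (a := -η) (by linarith) n
    rw [← sub_eq_add_neg] at this
    linarith
  obtain ⟨K, hK⟩ := exists_nat_ge (4 * n / (ε * η ^ 2) + 1)
  have hK0' : (0 : ℝ) < K := lt_of_lt_of_le (by positivity) hK
  have hK0 : 0 < K := by exact_mod_cast hK0'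
  have hKε : 4 * n ≤ ε * (η ^ 2 * K) := by
    have : 4 * n / (ε * η ^ 2) ≤ K := by linarith
    rw [div_le_iff₀ (by positivity)] at this
    linarith
  obtain ⟨C, hC⟩ := exists_nat_ge ((2 * n + 1) * K / ε)
  refine ⟨C, fun d 𝓛 h𝓛 hCN => ?_⟩
  set N := 𝓛.card with hN
  have hCN' : (2 * n + 1) * K ≤ ε * N := by
    have : (2 * n + 1) * K / ε ≤ N := hC.trans (by exact_mod_cast hCN)
    rw [div_le_iff₀ hε] at this
    linarith
  have hN1 : (2 * n + 1) * K ≤ N := by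
    have : ((2 * n + 1) * K : ℝ) ≤ N :=
      hCN'.trans (mul_le_of_le_one_left (by positivity) hε1)
    exact_mod_cast this
  have hN0 : 0 < N := lt_of_lt_of_le (by positivity) hN1
  -- `M` complete blocks; the starting block ranges over `m = M - n` values
  set M := N / K with hM
  have hMn : 2 * n + 1 ≤ M := (Nat.le_div_iff_mul_le hK0).2 hN1
  have hMN : M * K ≤ N := Nat.div_mul_le_self N K
  have hNM : N < (M + 1) * K := by
    have := Nat.lt_mul_div_succ N hK0
    rw [mul_comm] at this; exact this
  obtain ⟨m, hm⟩ : ∃ m, M = m + n := ⟨M - n, by omega⟩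
  obtain ⟨E, hE, hEL⟩ := exists_enum h𝓛 hN0
  have : Nonempty (Fin m) := ⟨⟨0, by omega⟩⟩
  have : Nonempty (Fin K) := ⟨⟨0, hK0⟩⟩
  set F : (Fin m × (α → Fin K)) × ((Fin d → Bool) × (α → Fin d → Bool)) → α → Cube d :=
    fun ω a => toLex (branch (levels E r ω.1) ω.2 a) with hF
  have hFm : ∀ ω, StrictMono (F ω) := fun ω =>
    branch_strictMono (levels_strictMono hE hr hrn (by rw [← hm]; exact hMN) ω.1) ω.2
  obtain ⟨μ, hμ0, hμ1, hμs, hμQ⟩ := exists_pushforward F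
  refine ⟨μ, hμ0, hμ1, ?_, (Finset.Ico (n * K) (m * K)).image (fun t => (E t : ℕ) + 1), ?_, ?_, ?_⟩
  · intro φ hφ
    obtain ⟨ω, rfl⟩ := hμs φ hφ
    exact hFm ω
  · intro ℓ hℓ
    obtain ⟨t, ht, rfl⟩ := Finset.mem_image.1 hℓ
    refine hEL t ((Finset.mem_Ico.1 ht).2.trans_le (le_trans ?_ hMN))
    exact Nat.mul_le_mul_right _ (by omega)
  · have hmK : m * K ≤ N := le_trans (Nat.mul_le_mul_right _ (by omega)) hMN
    have hsub : (Finset.Ico (n * K) (m * K)).image (fun t => (E t : ℕ) + 1) ⊆ 𝓛 := by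
      intro ℓ hℓ
      obtain ⟨t, ht, rfl⟩ := Finset.mem_image.1 hℓ
      exact hEL t ((Finset.mem_Ico.1 ht).2.trans_le hmK)
    have hcard := Finset.card_sdiff_add_card_eq_card hsub
    rw [Finset.card_image_of_injOn, Nat.card_Ico] at hcard
    · have hle : (𝓛 \ (Finset.Ico (n * K) (m * K)).image (fun t => (E t : ℕ) + 1)).card
          ≤ (2 * n + 1) * K := by
        rw [hm] at hNM
        have : n * K ≤ m * K := Nat.mul_le_mul_right _ (by omega)
        have h3 : (m + n + 1) * K = m * K + n * K + K := by ring
        have h4 : (2 * n + 1) * K = 2 * (n * K) + K := by ring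
        omega
      refine le_trans ?_ hCN'
      exact_mod_cast hle
    · intro t ht t' ht' h
      simp only [Finset.coe_Ico, Set.mem_Ico] at ht ht'
      exact hE.injOn (ht.2.trans_le hmK) (ht'.2.trans_le hmK) (Fin.ext (by simpa using h))
  · intro ℓ hℓ
    obtain ⟨t, ht, rfl⟩ := Finset.mem_image.1 hℓ
    rw [Finset.mem_Ico] at ht
    set b := t / K with hb
    have hnb : n ≤ b := (Nat.le_div_iff_mul_le hK0).2 ht.1
    have hbm : b < m := (Nat.div_lt_iff_lt_mul hK0).2 ht.2
    have htau : (tau d ((E t : ℕ) + 1) : ℝ) = 2 ^ (2 * d - 2 - (E t : ℕ)) := by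
      rw [tau]; push_cast; congr 1; omega
    rw [htau]
    obtain ⟨Z, hZ, hZb⟩ := exceptional_card hK0 hE hMN (show b + n ≤ M by omega) hη hKε (E t)
    refine ⟨Z, hZ, fun x y hxy hat hnZ => ?_⟩
    obtain ⟨p, hp, hx, hy, hag⟩ := bits_of_lt hxy hat
    have hpt : p = E t := Fin.ext (by omega)
    subst hpt
    have hbal := hZb x y hnZ hx hag
    refine le_trans (le_trans ?_ (edgeCount_mul_le H F (fun ω => (hFm ω).injective) x y
      (c := (1 - η) ^ n / (m * K * 2 ^ (2 * d - 2 - (E t : ℕ)))) ?_)) (le_of_eq ?_)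
    · have hmK : (m : ℝ) * K ≤ N := by
        exact_mod_cast le_trans (Nat.mul_le_mul_right _ (by omega)) hMN
      have hm0 : (0 : ℝ) < m := by exact_mod_cast (show 0 < m by omega)
      rw [mul_comm (1 - ε), mul_div_assoc]
      gcongr
    · intro i j hij
      have hri := hrn i
      refine (pair_prob (x := ofLex x) (y := ofLex y) hE hr hrn (by rw [← hm]; exact hMN)
        hη.le hη1 (⟨b - r i, by omega⟩ : Fin m) ⟨t % K, Nat.mod_lt _ hK0⟩ hij
        ?_ hx hy hag ?_).trans (le_of_eq ?_)
      · simp only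
        rw [Nat.sub_add_cancel (by omega), hb, mul_comm, Nat.div_add_mod]
      · intro a _ β
        have hra := hrn a
        exact count_of_balanced (hbal (b - r i + r a) (Finset.mem_Ico.2 ⟨by omega, by omega⟩)) β
      · congr!
    · convert (hμQ (fun φ => ∃ u v, H.Adj u v ∧ u < v ∧ φ u = x ∧ φ v = y)).symm

/-- tiling lemma. For every ordered graph `H` and `ε > 0` there is `C`
such that for every `d` and every `𝓛 ⊆ [d]` with `|𝓛| ≥ C` there is a probability
distribution `μ` on strictly order-preserving maps `V(H) → {0,1}^d` such that for all but
an `ε`-proportion of levels `ℓ ∈ 𝓛` and all but an `ε`-proportion of pairs `x < y` at level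
`ℓ`, the probability that some edge of `H` is mapped onto `{x, y}` is at least
`(1−ε)·e(H)/(|𝓛|·τ_{ℓ,d})`. -/
theorem tiling_lemma
    {α : Type*} [Fintype α] [LinearOrder α] (H : SimpleGraph α)
    (ε : ℝ) (hε : 0 < ε) :
    ∃ C : ℕ, ∀ (d : ℕ) (𝓛 : Finset ℕ), 𝓛 ⊆ Finset.Icc 1 d → C ≤ 𝓛.card →
      ∃ μ : (α → Cube d) → ℝ,
        (∀ φ, 0 ≤ μ φ) ∧
        (∑ φ : α → Cube d, μ φ) = 1 ∧
        (∀ φ, μ φ ≠ 0 → StrictMono φ) ∧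
        ∃ 𝓛' ⊆ 𝓛, ((𝓛 \ 𝓛').card : ℝ) ≤ ε * (𝓛.card : ℝ) ∧
          ∀ ℓ ∈ 𝓛', ∃ Z : Set (Cube d × Cube d), (Z.ncard : ℝ) ≤ ε * (tau d ℓ : ℝ) ∧
            ∀ x y : Cube d, x < y → atLevel ℓ x y → (x, y) ∉ Z →
              (1 - ε) * (edgeCount H : ℝ) / ((𝓛.card : ℝ) * (tau d ℓ : ℝ)) ≤
                ∑ φ ∈ Finset.univ.filter
                    (fun φ : α → Cube d => ∃ u v, H.Adj u v ∧ u < v ∧ φ u = x ∧ φ v = y),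
                  μ φ := by
  obtain ⟨C, hC⟩ := tiling_aux H (min ε 1) (lt_min hε one_pos) (min_le_right _ _)
  refine ⟨C, fun d 𝓛 h𝓛 hcard => ?_⟩
  obtain ⟨μ, h0, h1, hs, 𝓛', hsub, hmiss, hZ⟩ := hC d 𝓛 h𝓛 hcard
  refine ⟨μ, h0, h1, hs, 𝓛', hsub, hmiss.trans ?_, fun ℓ hℓ => ?_⟩
  · gcongr
    exact min_le_left _ _
  · obtain ⟨Z, hZc, hZp⟩ := hZ ℓ hℓ
    refine ⟨Z, hZc.trans ?_, fun x y hxy hat hn => le_trans ?_ (hZp x y hxy hat hn)⟩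
    · gcongr
      exact min_le_left _ _
    · gcongr
      exact min_le_left _ _
end
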